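/- arXiv:math/0609258 — 3 statements merged into one kernel-verified Lean document; each statement's English description precedes it below -/
import Mathlib

section
/- Let n be even and k = n/2. Then the highest component L_k of the decomposition of the space F_k of square-free k-linear forms in n variables consists exactly of those forms depending only on the differences of the variables: L_k = {f ∈ F_k : f(x₁+c, …, x_n+c) = f(x₁,…,x_n) for all c ∈ ℂ}. -/
open scoped Classical

noncomputable section

open MvPolynomial

/-- The space of square-free `k`-linear forms in `n` variables: the span of the products
of `k` distinct variables. -/
noncomputable def Fspace (n k : ℕ) : Submodule ℂ (MvPolynomial (Fin n) ℂ) :=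
  Submodule.span ℂ {p | ∃ s : Finset (Fin n), s.card = k ∧ p = ∏ i ∈ s, X i}

/-- The elementary symmetric polynomial of degree `p` in the variables indexed by `s`. -/
noncomputable def esymmOn (n : ℕ) (s : Finset (Fin n)) (p : ℕ) : MvPolynomial (Fin n) ℂ :=
  ∑ t ∈ Finset.powersetCard p s, ∏ i ∈ t, X i

/-- The generator `X_I = (x_{i₁}-x_{i₂})⋯(x_{i_{2l-1}}-x_{i_{2l}}) · σ_{k-l}({x_j : j ∉ I})`
attached to a tuple `I` of `2l` distinct indices. -/
noncomputable def XIform (n k l : ℕ) (I : Fin (2 * l) ↪ Fin n) : MvPolynomial (Fin n) ℂ :=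
  (∏ t : Fin l,
      (X (I ⟨2 * t.1, by have := t.isLt; omega⟩) - X (I ⟨2 * t.1 + 1, by have := t.isLt; omega⟩))) *
    esymmOn n (Finset.univ.filter fun j => j ∉ Set.range I) (k - l)

/-- The subspace `L_l ⊆ F_k`: the span of the forms `X_I` over all tuples `I` of `2l`
distinct indices. -/
noncomputable def Lsub (n k l : ℕ) : Submodule ℂ (MvPolynomial (Fin n) ℂ) :=
  Submodule.span ℂ (Set.range (XIform n k l))

def FS (n : ℕ) (S : Finset (Fin n)) (k : ℕ) : Submodule ℂ (MvPolynomial (Fin n) ℂ) :=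
  Submodule.span ℂ {p | ∃ s : Finset (Fin n), s ⊆ S ∧ s.card = k ∧ p = ∏ i ∈ s, X i}

def DD (n : ℕ) : Derivation ℂ (MvPolynomial (Fin n) ℂ) (MvPolynomial (Fin n) ℂ) :=
  mkDerivation ℂ (fun _ => 1)

def GS (n : ℕ) (S : Finset (Fin n)) (k : ℕ) : Submodule ℂ (MvPolynomial (Fin n) ℂ) :=
  Submodule.span ℂ {p | ∃ e : ℕ → Fin n, Set.InjOn e (Set.Iio (2 * k)) ∧
    (∀ i < 2 * k, e i ∈ S) ∧ p = ∏ t ∈ Finset.range k, (X (e (2 * t)) - X (e (2 * t + 1)))}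

lemma DD_X (n : ℕ) (i : Fin n) : DD n (X i) = 1 := by simp [DD, mkDerivation_X]

lemma FS_mono {n : ℕ} {S T : Finset (Fin n)} (h : S ⊆ T) (k : ℕ) : FS n S k ≤ FS n T k := by
  apply Submodule.span_mono
  rintro p ⟨s, hs, hc, rfl⟩
  exact ⟨s, hs.trans h, hc, rfl⟩

lemma GS_mono {n : ℕ} {S T : Finset (Fin n)} (h : S ⊆ T) (k : ℕ) : GS n S k ≤ GS n T k := by
  apply Submodule.span_mono
  rintro p ⟨e, he, hc, rfl⟩
  exact ⟨e, he, fun i hi => h (hc i hi), rfl⟩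

lemma FS_X_mul {n : ℕ} {S : Finset (Fin n)} {a : Fin n} (ha : a ∉ S) {k : ℕ}
    {f : MvPolynomial (Fin n) ℂ} (hf : f ∈ FS n S k) : X a * f ∈ FS n (insert a S) (k + 1) := by
  induction hf using Submodule.span_induction with
  | mem x hx =>
    obtain ⟨s, hs, hc, rfl⟩ := hx
    have has : a ∉ s := fun h => ha (hs h)
    refine Submodule.subset_span ⟨insert a s, Finset.insert_subset_insert a hs, ?_, ?_⟩
    · rw [Finset.card_insert_of_notMem has, hc]
    · rw [Finset.prod_insert has]
  | zero => simp
  | add x y _ _ hx hy => rw [mul_add]; exact add_mem hx hy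
  | smul c x _ hx => rw [mul_smul_comm]; exact Submodule.smul_mem _ _ hx

lemma FS_decomp {n : ℕ} {S : Finset (Fin n)} {a : Fin n} (ha : a ∉ S) {k : ℕ}
    {f : MvPolynomial (Fin n) ℂ} (hf : f ∈ FS n (insert a S) (k + 1)) :
    ∃ g ∈ FS n S k, ∃ h ∈ FS n S (k + 1), f = X a * g + h := by
  induction hf using Submodule.span_induction with
  | mem x hx =>
    obtain ⟨s, hs, hc, rfl⟩ := hx
    by_cases has : a ∈ s
    · refine ⟨∏ i ∈ s.erase a, X i, Submodule.subset_span ⟨s.erase a, ?_, ?_, rfl⟩, 0,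
        zero_mem _, ?_⟩
      · intro i hi
        have := hs (Finset.mem_of_mem_erase hi)
        have h2 := Finset.ne_of_mem_erase hi
        simp_all
      · rw [Finset.card_erase_of_mem has, hc]; rfl
      · rw [add_zero, Finset.mul_prod_erase s _ has]
    · refine ⟨0, zero_mem _, ∏ i ∈ s, X i, Submodule.subset_span ⟨s, ?_, hc, rfl⟩, by simp⟩
      exact (Finset.subset_insert_iff_of_notMem has).1 hs
  | zero => exact ⟨0, zero_mem _, 0, zero_mem _, by simp⟩
  | add x y _ _ hx hy =>
    obtain ⟨g, hg, h, hh, rfl⟩ := hx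
    obtain ⟨g', hg', h', hh', rfl⟩ := hy
    exact ⟨g + g', add_mem hg hg', h + h', add_mem hh hh', by ring⟩
  | smul c x _ hx =>
    obtain ⟨g, hg, h, hh, rfl⟩ := hx
    exact ⟨c • g, Submodule.smul_mem _ _ hg, c • h, Submodule.smul_mem _ _ hh, by
      rw [smul_add, mul_smul_comm]⟩

lemma FS_pderiv {n : ℕ} {S : Finset (Fin n)} {a : Fin n} (ha : a ∉ S) {k : ℕ}
    {f : MvPolynomial (Fin n) ℂ} (hf : f ∈ FS n S k) : pderiv a f = 0 := by
  induction hf using Submodule.span_induction with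
  | mem x hx =>
    obtain ⟨s, hs, hc, rfl⟩ := hx
    have has : a ∉ s := fun h => ha (hs h)
    clear hc hs
    induction s using Finset.induction_on with
    | empty => simp
    | insert b s hb ih =>
      rw [Finset.prod_insert hb, Derivation.leibniz, ih (fun h => has (by simp [h])),
        pderiv_X_of_ne (by rintro rfl; simp at has)]
      simp
  | zero => simp
  | add x y _ _ hx hy => rw [map_add, hx, hy, add_zero]
  | smul c x _ hx => rw [Derivation.map_smul, hx, smul_zero]

lemma pderiv_DD {n : ℕ} (a : Fin n) (f : MvPolynomial (Fin n) ℂ) :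
    pderiv a (DD n f) = DD n (pderiv a f) := by
  have : ⁅(pderiv a : Derivation ℂ (MvPolynomial (Fin n) ℂ) (MvPolynomial (Fin n) ℂ)), DD n⁆ = 0 := by
    apply MvPolynomial.derivation_ext
    intro i
    rw [Derivation.commutator_apply, DD_X]
    by_cases h : i = a
    · subst h; simp
    · rw [pderiv_X_of_ne h]; simp
  have h2 := congrArg (fun d => d f) this
  simp only [Derivation.commutator_apply, Derivation.zero_apply] at h2
  exact sub_eq_zero.1 h2

lemma pderiv_DD_iter {n : ℕ} (a : Fin n) (f : MvPolynomial (Fin n) ℂ) (hf : pderiv a f = 0)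
    (j : ℕ) : pderiv a ((DD n)^[j] f) = 0 := by
  induction j with
  | zero => simpa
  | succ j ih => rw [Function.iterate_succ_apply', pderiv_DD, ih, map_zero]

lemma split_zero {n : ℕ} (a : Fin n) {u v : MvPolynomial (Fin n) ℂ} (hu : pderiv a u = 0)
    (hv : pderiv a v = 0) (h : X a * u + v = 0) : u = 0 ∧ v = 0 := by
  have h2 := congrArg (pderiv a) h
  rw [map_add, Derivation.leibniz, hu, hv, pderiv_X_self] at h2
  have h3 : u = 0 := by simpa using h2
  subst h3
  exact ⟨rfl, by simpa using h⟩

lemma DD_iter_zero (n j : ℕ) : (DD n)^[j] 0 = 0 := by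
  induction j with
  | zero => rfl
  | succ j ih => rw [Function.iterate_succ_apply', ih, map_zero]

lemma DD_iter_add (n j : ℕ) (f g : MvPolynomial (Fin n) ℂ) :
    (DD n)^[j] (f + g) = (DD n)^[j] f + (DD n)^[j] g := by
  induction j with
  | zero => rfl
  | succ j ih => simp only [Function.iterate_succ_apply', ih, map_add]

lemma DD_iter_X_mul (n j : ℕ) (a : Fin n) (g : MvPolynomial (Fin n) ℂ) :
    (DD n)^[j + 1] (X a * g) =
      X a * (DD n)^[j + 1] g + ((j + 1 : ℕ) : ℂ) • (DD n)^[j] g := by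
  induction j with
  | zero => simp [Derivation.leibniz, DD_X]
  | succ j ih =>
    rw [Function.iterate_succ_apply', ih, map_add, Derivation.leibniz, DD_X,
      Derivation.map_smul, ← Function.iterate_succ_apply' (DD n) (j + 1),
      ← Function.iterate_succ_apply' (DD n) j]
    push_cast
    simp only [smul_eq_mul, mul_one, add_smul, one_smul]
    ring

lemma FS_empty_succ {n k : ℕ} {f : MvPolynomial (Fin n) ℂ} (hf : f ∈ FS n ∅ (k + 1)) : f = 0 := by
  have : FS n ∅ (k + 1) = ⊥ := by
    rw [FS, Submodule.span_eq_bot]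
    rintro x ⟨s, hs, hc, rfl⟩
    rw [Finset.subset_empty.1 hs] at hc
    simp at hc
  rw [this] at hf
  simpa using hf

lemma inj {n : ℕ} (S : Finset (Fin n)) : ∀ (k j : ℕ) (f : MvPolynomial (Fin n) ℂ),
    f ∈ FS n S k → S.card + j ≤ 2 * k → (DD n)^[j] f = 0 → f = 0 := by
  induction S using Finset.induction_on with
  | empty =>
    intro k j f hf hk hD
    rcases k with _ | k
    · have : j = 0 := by omega
      subst this
      simpa using hD
    · exact FS_empty_succ hf
  | insert a S ha ih =>
    intro k j f hf hk hD
    rw [Finset.card_insert_of_notMem ha] at hk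
    rcases k with _ | k
    · omega
    rcases j with _ | j
    · simpa using hD
    obtain ⟨g, hg, h, hh, rfl⟩ := FS_decomp ha hf
    rw [DD_iter_add, DD_iter_X_mul, add_assoc] at hD
    have pg := FS_pderiv ha hg
    have ph := FS_pderiv ha hh
    obtain ⟨h1, h2⟩ := split_zero a (pderiv_DD_iter a g pg (j + 1)) (by
      rw [map_add, Derivation.map_smul, pderiv_DD_iter a g pg, pderiv_DD_iter a h ph]; simp) hD
    have hh0 : h = 0 := by
      apply ih (k + 1) (j + 2) h hh (by omega)
      have := congrArg (DD n) h2
      rw [map_add, Derivation.map_smul, ← Function.iterate_succ_apply' (DD n) j, h1,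
        ← Function.iterate_succ_apply' (DD n) (j + 1)] at this
      simpa using this
    subst hh0
    have hg0 : g = 0 := by
      apply ih k j g hg (by omega)
      rw [DD_iter_zero, add_zero] at h2
      rcases smul_eq_zero.1 h2 with h3 | h3
      · exact absurd h3 (Nat.cast_ne_zero.2 (Nat.succ_ne_zero j))
      · exact h3
    subst hg0
    simp

lemma gen_DD {n : ℕ} (e : ℕ → Fin n) (k : ℕ) :
    DD n (∏ t ∈ Finset.range k, (X (e (2 * t)) - X (e (2 * t + 1)))) = 0 := by
  induction k with
  | zero => simp
  | succ k ih => rw [Finset.prod_range_succ, Derivation.leibniz, ih, map_sub, DD_X, DD_X]; simp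

lemma gen_FS {n : ℕ} (e : ℕ → Fin n) (k : ℕ) (he : Set.InjOn e (Set.Iio (2 * k))) :
    (∏ t ∈ Finset.range k, (X (e (2 * t)) - X (e (2 * t + 1))) : MvPolynomial (Fin n) ℂ)
      ∈ FS n ((Finset.range (2 * k)).image e) k := by
  induction k with
  | zero => exact Submodule.subset_span ⟨∅, by simp, rfl, by simp⟩
  | succ k ih =>
    have ih' := ih (he.mono (fun i hi => by simp only [Set.mem_Iio] at *; omega))
    have hn : ∀ m, 2 * k ≤ m → m < 2 * (k + 1) → e m ∉ (Finset.range (2 * k)).image e := by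
      intro m hm hm2 hmem
      obtain ⟨i, hi, hie⟩ := Finset.mem_image.1 hmem
      rw [Finset.mem_range] at hi
      have := he (by simp only [Set.mem_Iio]; omega) (by simp only [Set.mem_Iio]; omega) hie
      omega
    have hsub : ∀ m, m < 2 * (k + 1) → insert (e m) ((Finset.range (2 * k)).image e) ⊆
        (Finset.range (2 * (k + 1))).image e := by
      intro m hm
      apply Finset.insert_subset
      · exact Finset.mem_image_of_mem _ (Finset.mem_range.2 hm)
      · exact Finset.image_subset_image (Finset.range_subset_range.2 (by omega))
    rw [Finset.prod_range_succ, mul_comm (Finset.prod _ _), sub_mul]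
    apply sub_mem
    · exact FS_mono (hsub _ (by omega)) _ (FS_X_mul (hn _ (by omega) (by omega)) ih')
    · exact FS_mono (hsub _ (by omega)) _ (FS_X_mul (hn _ (by omega) (by omega)) ih')

lemma lift_gen {n k : ℕ} {S : Finset (Fin n)} {a : Fin n} (ha : a ∉ S) (hS : 2 * k < S.card)
    {g : MvPolynomial (Fin n) ℂ} (hg : g ∈ GS n S k) :
    ∃ q ∈ GS n (insert a S) (k + 1), ∃ h ∈ FS n S (k + 1), q = X a * g + h ∧ DD n q = 0 := by
  induction hg using Submodule.span_induction with
  | mem x hx =>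
    obtain ⟨e, he, heS, rfl⟩ := hx
    obtain ⟨j, hjS, hj⟩ : ∃ j ∈ S, j ∉ (Finset.range (2 * k)).image e := by
      apply Finset.exists_mem_notMem_of_card_lt_card
      exact (Finset.card_image_le.trans (by simp)).trans_lt hS
    have hj' : ∀ i < 2 * k, e i ≠ j := fun i hi hij =>
      hj (Finset.mem_image.2 ⟨i, Finset.mem_range.2 hi, hij⟩)
    have haj : a ≠ j := by rintro rfl; exact ha hjS
    have hae : ∀ i < 2 * k, e i ≠ a := fun i hi hij => ha (hij ▸ heS i hi)
    let e' : ℕ → Fin n := fun i => if i < 2 * k then e i else if i = 2 * k then a else j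
    have hprod : (∏ t ∈ Finset.range (k + 1), (X (e' (2 * t)) - X (e' (2 * t + 1))) :
        MvPolynomial (Fin n) ℂ) = (X a - X j) *
          ∏ t ∈ Finset.range k, (X (e (2 * t)) - X (e (2 * t + 1))) := by
      rw [Finset.prod_range_succ, mul_comm]
      congr 1
      · simp [e']
      · apply Finset.prod_congr rfl
        intro t ht
        rw [Finset.mem_range] at ht
        have h1 : 2 * t < 2 * k := by omega
        have h2 : 2 * t + 1 < 2 * k := by omega
        simp only [e', if_pos h1, if_pos h2]
    refine ⟨_, Submodule.subset_span ⟨e', ?_, ?_, rfl⟩,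
      -(X j * ∏ t ∈ Finset.range k, (X (e (2 * t)) - X (e (2 * t + 1)))), ?_, ?_, gen_DD e' (k + 1)⟩
    · intro x hx y hy hxy
      simp only [Set.mem_Iio] at hx hy
      simp only [e'] at hxy
      split_ifs at hxy with h1 h2 h3 h4 h5 h6 h7 h8
      all_goals first
        | omega
        | exact he h1 h2 hxy
        | exact absurd hxy (hae _ (by assumption))
        | exact absurd hxy (hj' _ (by assumption))
        | exact absurd hxy.symm (hae _ (by assumption))
        | exact absurd hxy.symm (hj' _ (by assumption))
        | exact absurd hxy haj
        | exact absurd hxy.symm haj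
    · intro i hi
      simp only [e']
      split_ifs with h1 h2
      · exact Finset.mem_insert_of_mem (heS i h1)
      · exact Finset.mem_insert_self _ _
      · exact Finset.mem_insert_of_mem hjS
    · apply neg_mem
      refine FS_mono ?_ _ (FS_X_mul hj (gen_FS e k he))
      apply Finset.insert_subset hjS
      intro i hi
      obtain ⟨m, hm, rfl⟩ := Finset.mem_image.1 hi
      exact heS m (Finset.mem_range.1 hm)
    · rw [hprod]; ring
  | zero => exact ⟨0, zero_mem _, 0, zero_mem _, by simp, by simp⟩
  | add x y _ _ hx hy =>
    obtain ⟨q, hq, h, hh, rfl, hd⟩ := hx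
    obtain ⟨q', hq', h', hh', rfl, hd'⟩ := hy
    exact ⟨_, add_mem hq hq', h + h', add_mem hh hh', by ring, by rw [map_add, hd, hd', add_zero]⟩
  | smul c x _ hx =>
    obtain ⟨q, hq, h, hh, rfl, hd⟩ := hx
    exact ⟨_, Submodule.smul_mem _ c hq, c • h, Submodule.smul_mem _ _ hh, by
      rw [smul_add, mul_smul_comm], by rw [Derivation.map_smul, hd, smul_zero]⟩

lemma FS_zero_le {n : ℕ} [Nonempty (Fin n)] (S : Finset (Fin n)) : FS n S 0 ≤ GS n S 0 := by
  apply Submodule.span_mono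
  rintro p ⟨s, hs, hc, rfl⟩
  refine ⟨fun _ => Classical.arbitrary _, ?_, ?_, ?_⟩
  · intro x hx; simp at hx
  · intro i hi; omega
  · rw [Finset.card_eq_zero.1 hc]; simp

lemma ker_le {n : ℕ} [Nonempty (Fin n)] (S : Finset (Fin n)) :
    ∀ (k : ℕ) (f : MvPolynomial (Fin n) ℂ), f ∈ FS n S k → DD n f = 0 → f ∈ GS n S k := by
  induction S using Finset.induction_on with
  | empty =>
    intro k f hf hD
    rcases k with _ | k
    · exact FS_zero_le _ hf
    · rw [FS_empty_succ hf]; exact zero_mem _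
  | insert a S ha ih =>
    intro k f hf hD
    rcases k with _ | k
    · exact FS_zero_le _ hf
    by_cases hS : 2 * k < S.card
    · obtain ⟨g, hg, h, hh, rfl⟩ := FS_decomp ha hf
      have pg := FS_pderiv ha hg
      have ph := FS_pderiv ha hh
      have hD2 := hD
      rw [map_add, Derivation.leibniz, DD_X, smul_eq_mul, smul_eq_mul, mul_one, add_assoc] at hD2
      obtain ⟨h1, h2⟩ := split_zero a (by rw [pderiv_DD, pg, map_zero])
        (by rw [map_add, pg, pderiv_DD, ph, map_zero, add_zero]) hD2
      obtain ⟨q, hq, h', hh', rfl, hd⟩ := lift_gen ha hS (ih k g hg h1)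
      have h3 : h - h' ∈ GS n S (k + 1) := by
        apply ih _ _ (sub_mem hh hh')
        have : h - h' = (X a * g + h) - (X a * g + h') := by ring
        rw [this, map_sub, hD, hd, sub_zero]
      have h4 : X a * g + h = (X a * g + h') + (h - h') := by ring
      rw [h4]
      exact add_mem hq (GS_mono (Finset.subset_insert _ _) _ h3)
    · have : f = 0 := by
        apply inj _ (k + 1) 1 f hf
        · rw [Finset.card_insert_of_notMem ha]; omega
        · simpa using hD
      rw [this]; exact zero_mem _

def Phi (n : ℕ) : MvPolynomial (Fin n) ℂ →ₐ[ℂ] Polynomial (MvPolynomial (Fin n) ℂ) :=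
  aeval (fun i => Polynomial.C (X i) + Polynomial.X)

lemma Phi_eval (n : ℕ) (c : ℂ) (f : MvPolynomial (Fin n) ℂ) :
    (Phi n f).eval (C c) = aeval (fun i : Fin n => X i + C c) f := by
  induction f using MvPolynomial.induction_on with
  | C a => simp [Phi, Polynomial.algebraMap_apply, MvPolynomial.algebraMap_eq]
  | add p q hp hq => simp [hp, hq]
  | mul_X p i hp => rw [map_mul, Polynomial.eval_mul, hp, map_mul]; simp [Phi]

lemma Phi_deriv (n : ℕ) (f : MvPolynomial (Fin n) ℂ) :
    (Phi n f).eval 0 = f ∧ (Polynomial.derivative (Phi n f)).eval 0 = DD n f := by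
  induction f using MvPolynomial.induction_on with
  | C a =>
    have : Phi n (C a) = Polynomial.C (C a) := by
      simp [Phi, Polynomial.algebraMap_apply, MvPolynomial.algebraMap_eq]
    rw [this]
    simp [DD]
  | add p q hp hq => simp [hp.1, hp.2, hq.1, hq.2]
  | mul_X p i hp =>
    have : Phi n (X i) = Polynomial.C (X i) + Polynomial.X := by simp [Phi]
    rw [map_mul, this, Derivation.leibniz, DD_X]
    simp [hp.1, hp.2]
    ring

lemma DD_of_shift {n : ℕ} {f : MvPolynomial (Fin n) ℂ}
    (h : ∀ c : ℂ, aeval (fun i : Fin n => X i + C c) f = f) : DD n f = 0 := by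
  have : Phi n f = Polynomial.C f := by
    apply Polynomial.eq_of_infinite_eval_eq
    apply Set.Infinite.mono (s := Set.range (C : ℂ → MvPolynomial (Fin n) ℂ))
    · rintro _ ⟨c, rfl⟩
      simp only [Set.mem_setOf_eq, Polynomial.eval_C]
      rw [Phi_eval, h]
    · exact Set.infinite_range_of_injective (C_injective _ _)
  rw [← (Phi_deriv n f).2, this]
  simp

lemma XIform_top (n k : ℕ) (I : Fin (2 * k) ↪ Fin n) : XIform n k k I = ∏ t : Fin k,
    (X (I ⟨2 * t.1, by have := t.isLt; omega⟩) -
      X (I ⟨2 * t.1 + 1, by have := t.isLt; omega⟩)) := by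
  simp [XIform, esymmOn]

lemma Fspace_eq (n k : ℕ) : Fspace n k = FS n Finset.univ k := by
  simp [Fspace, FS]

/-- For even `n = 2k`, the highest component `L_k ⊆ F_k` consists exactly of the
square-free `k`-linear forms that depend only on the differences of the variables,
i.e. are invariant under simultaneously adding a constant to all variables. -/
theorem Lsub_top_eq_shift_invariants (n k : ℕ) (hnk : n = 2 * k) :
    (Lsub n k k : Set (MvPolynomial (Fin n) ℂ)) =
      {f | f ∈ Fspace n k ∧
        ∀ c : ℂ, MvPolynomial.aeval (fun i : Fin n => X i + C c) f = f} := by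
  have hL : ∀ I : Fin (2 * k) ↪ Fin n, XIform n k k I ∈ FS n Finset.univ k := by
    intro I
    rcases Nat.eq_zero_or_pos k with rfl | hk
    · rw [XIform_top]
      exact Submodule.subset_span ⟨∅, by simp, rfl, by simp⟩
    · let e : ℕ → Fin n := fun i => if h : i < 2 * k then I ⟨i, h⟩ else I ⟨0, by omega⟩
      have : XIform n k k I =
          ∏ t ∈ Finset.range k, (X (e (2 * t)) - X (e (2 * t + 1))) := by
        rw [XIform_top, Finset.prod_range]
        apply Finset.prod_congr rfl
        intro t _
        have h1 : 2 * t.1 < 2 * k := by have := t.isLt; omega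
        have h2 : 2 * t.1 + 1 < 2 * k := by have := t.isLt; omega
        simp only [e, dif_pos h1, dif_pos h2]
      rw [this]
      refine FS_mono (Finset.subset_univ _) _ (gen_FS e k ?_)
      intro x hx y hy hxy
      simp only [Set.mem_Iio] at hx hy
      simp only [e, dif_pos hx, dif_pos hy] at hxy
      simpa using I.injective hxy
  ext f
  simp only [SetLike.mem_coe, Set.mem_setOf_eq, Fspace_eq]
  constructor
  · intro hf
    refine ⟨?_, fun c => ?_⟩
    · refine (Submodule.span_le.2 ?_) hf
      rintro _ ⟨I, rfl⟩
      exact hL I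
    · induction hf using Submodule.span_induction with
      | mem x hx =>
        obtain ⟨I, rfl⟩ := hx
        rw [XIform_top, map_prod]
        simp
      | zero => simp
      | add x y _ _ hx hy => rw [map_add, hx, hy]
      | smul c x _ hx => rw [map_smul, hx]
  · rintro ⟨hf, hs⟩
    rcases Nat.eq_zero_or_pos k with rfl | hk
    · refine Submodule.span_mono ?_ hf
      rintro p ⟨s, hs, hc, rfl⟩
      refine ⟨⟨fun i => absurd i.isLt (by omega), fun i => absurd i.isLt (by omega)⟩, ?_⟩
      rw [XIform_top, Finset.card_eq_zero.1 hc]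
      simp
    · haveI : Nonempty (Fin n) := ⟨⟨0, by omega⟩⟩
      refine Submodule.span_mono ?_ (ker_le _ k f hf (DD_of_shift hs))
      rintro p ⟨e, he, -, rfl⟩
      refine ⟨⟨fun i => e i.1, fun x y hxy => Fin.ext (he x.isLt y.isLt hxy)⟩, ?_⟩
      rw [XIform_top, Finset.prod_range]
      rfl

end
end

section
/- Let λ ⊢ n. The Specht module SP_λ (the ℂ-linear span of all Specht polynomials SP_T of shape λ) equals the subspace of L_λ consisting of all forms depending only on the differences of the variables: SP_λ = {f ∈ L_λ : f(x₁+c, …, x_n+c) = f(x₁,…,x_n) for all c ∈ ℂ}. -/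
open scoped Classical

noncomputable section

open MvPolynomial

/-- The Specht polynomial of a bijective filling `T` of the cells of `lam` by `0,…,n-1`:
the product over all pairs of cells in the same column (the first strictly above the
second) of the differences of the corresponding variables — i.e. the product of the
column Vandermonde determinants. -/
noncomputable def spechtPoly (n : ℕ) (lam : YoungDiagram) (T : lam.cells ≃ Fin n) :
    MvPolynomial (Fin n) ℂ :=
  ∏ p ∈ Finset.univ.filter
      (fun p : lam.cells × lam.cells =>
        (p.1 : ℕ × ℕ).2 = (p.2 : ℕ × ℕ).2 ∧ (p.1 : ℕ × ℕ).1 < (p.2 : ℕ × ℕ).1),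
    (X (T p.1) - X (T p.2))

/-- The Specht module: the linear span of all Specht polynomials of shape `lam`. -/
noncomputable def spechtModule (n : ℕ) (lam : YoungDiagram) :
    Submodule ℂ (MvPolynomial (Fin n) ℂ) :=
  Submodule.span ℂ (Set.range (spechtPoly n lam))

/-- The space `L_λ`: the span of all monomials in `x_0,…,x_{n-1}` whose multiset of
exponents (over all `n` variables, zero exponents included) equals the multiset of
(0-indexed) row indices of the cells of `λ`. -/
noncomputable def Lspace (n : ℕ) (lam : YoungDiagram) : Submodule ℂ (MvPolynomial (Fin n) ℂ) :=
  Submodule.span ℂ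
    {p | ∃ d : Fin n →₀ ℕ,
      Multiset.map (⇑d) Finset.univ.val = Multiset.map Prod.fst lam.cells.val ∧
      p = MvPolynomial.monomial d (1 : ℂ)}

theorem gott_sum {α : Type*} [DecidableEq α] (S : Finset α) (b : ℕ) (g : Finset α → ℂ)
    (P : Finset α → Prop) [DecidablePred P] :
    ∑ B ∈ (S.powersetCard b).filter P, ∑ k ∈ S \ B, g (insert k B) =
      ∑ A ∈ S.powersetCard (b+1), ∑ k ∈ A, if P (A.erase k) then g A else 0 := by
  simp_rw [← Finset.sum_filter]
  rw [Finset.sum_sigma', Finset.sum_sigma']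
  refine Finset.sum_bij' (fun x _ => ⟨insert x.2 x.1, x.2⟩) (fun x _ => ⟨x.1.erase x.2, x.2⟩)
    ?_ ?_ ?_ ?_ ?_
  · rintro ⟨B, k⟩ h
    simp only [Finset.mem_sigma, Finset.mem_filter, Finset.mem_powersetCard, Finset.mem_sdiff] at h ⊢
    obtain ⟨⟨⟨h1, h2⟩, h3⟩, h4, h5⟩ := h
    refine ⟨⟨?_, ?_⟩, ?_, ?_⟩
    · exact Finset.insert_subset h4 h1
    · rw [Finset.card_insert_of_notMem h5, h2]
    · simp
    · rwa [Finset.erase_insert h5]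
  · rintro ⟨A, k⟩ h
    simp only [Finset.mem_sigma, Finset.mem_filter, Finset.mem_powersetCard, Finset.mem_sdiff] at h ⊢
    obtain ⟨⟨h1, h2⟩, h3, h4⟩ := h
    refine ⟨⟨⟨(Finset.erase_subset _ _).trans h1, ?_⟩, h4⟩, h1 h3, by simp⟩
    rw [Finset.card_erase_of_mem h3, h2]; rfl
  · rintro ⟨B, k⟩ h
    simp only [Finset.mem_sigma, Finset.mem_filter, Finset.mem_powersetCard, Finset.mem_sdiff] at h ⊢
    simp [Finset.erase_insert h.2.2]
  · rintro ⟨A, k⟩ h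
    simp only [Finset.mem_sigma, Finset.mem_filter, Finset.mem_powersetCard, Finset.mem_sdiff] at h ⊢
    simp [Finset.insert_erase h.2.1]
  · rintro ⟨B, k⟩ h
    rfl

theorem gott {α : Type*} [DecidableEq α] (S : Finset α) (b : ℕ) (g : Finset α → ℂ)
    (hg : ∀ B ⊆ S, B.card + 1 = b → ∑ k ∈ S \ B, g (insert k B) = 0)
    (A0 : Finset α) (hA : A0 ⊆ S) (hc : A0.card = b) (hS : S.card < 2 * b) : g A0 = 0 := by
  obtain ⟨b, rfl⟩ : ∃ b', b = b' + 1 := ⟨b - 1, by omega⟩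
  set σ : ℕ → ℂ := fun j => ∑ A ∈ S.powersetCard (b+1), if (A ∩ A0).card = j then g A else 0
    with hσ
  have step : ∀ j, j < b + 1 → ((b + 1 - j : ℕ) : ℂ) * σ j + ((j + 1 : ℕ) : ℂ) * σ (j+1) = 0 := by
    intro j hj
    have h0 : ∑ B ∈ (S.powersetCard b).filter (fun B => (B ∩ A0).card = j),
        ∑ k ∈ S \ B, g (insert k B) = 0 := by
      apply Finset.sum_eq_zero
      intro B hB
      simp only [Finset.mem_filter, Finset.mem_powersetCard] at hB
      exact hg B hB.1.1 (by omega)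
    rw [gott_sum] at h0
    rw [← h0, hσ]
    simp only [Finset.mul_sum]
    rw [← Finset.sum_add_distrib]
    apply Finset.sum_congr rfl
    intro A hA'
    simp only [Finset.mem_powersetCard] at hA'
    rw [← Finset.sum_inter_add_sum_sdiff A A0]
    have e1 : ∑ k ∈ A ∩ A0, (if (A.erase k ∩ A0).card = j then g A else 0) =
        ∑ k ∈ A ∩ A0, (if (A ∩ A0).card = j + 1 then g A else 0) := by
      apply Finset.sum_congr rfl
      intro k hk
      have : (A.erase k ∩ A0) = (A ∩ A0).erase k := by
        ext x; simp
      rw [this]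
      have h2 := Finset.card_erase_add_one hk
      have h4 : ((A ∩ A0).erase k).card = j ↔ (A ∩ A0).card = j + 1 := by omega
      simp only [h4]
    have e2 : ∑ k ∈ A \ A0, (if (A.erase k ∩ A0).card = j then g A else 0) =
        ∑ k ∈ A \ A0, (if (A ∩ A0).card = j then g A else 0) := by
      apply Finset.sum_congr rfl
      intro k hk
      have : (A.erase k ∩ A0) = (A ∩ A0) := by
        ext x
        simp only [Finset.mem_inter, Finset.mem_erase, Finset.mem_sdiff] at hk ⊢
        constructor
        · tauto
        · rintro ⟨h1, h2⟩
          refine ⟨⟨?_, h1⟩, h2⟩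
          rintro rfl; tauto
      rw [this]
    rw [e1, e2, Finset.sum_const, Finset.sum_const]
    have h3 := Finset.card_inter_add_card_sdiff A A0
    simp only [nsmul_eq_mul]
    rw [add_comm]
    congr 1
    · split_ifs with h
      · rw [h]
      · simp
    · split_ifs with h
      · congr 2; omega
      · simp
  have all : ∀ j, j ≤ b + 1 → σ j = 0 := by
    intro j
    induction j with
    | zero =>
      intro _
      apply Finset.sum_eq_zero
      intro A hA'
      simp only [Finset.mem_powersetCard] at hA'
      rw [if_neg]
      have h1 := Finset.card_union_add_card_inter A A0
      have h2 := Finset.card_le_card (Finset.union_subset hA'.1 hA)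
      omega
    | succ j ih =>
      intro hj
      have := step j (by omega)
      rw [ih (by omega), mul_zero, zero_add] at this
      rcases mul_eq_zero.1 this with h | h
      · exact absurd h (by exact_mod_cast Nat.succ_ne_zero j)
      · exact h
  have := all (b+1) le_rfl
  rw [hσ] at this
  simp only at this
  rw [Finset.sum_eq_single A0] at this
  · rw [if_pos (by simpa using hc)] at this
    exact this
  · intro A hA' hne
    simp only [Finset.mem_powersetCard] at hA'
    rw [if_neg]
    intro h
    apply hne
    have h1 : A ∩ A0 = A := Finset.eq_of_subset_of_card_le Finset.inter_subset_left (by omega)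
    have h2 : A ∩ A0 = A0 := Finset.eq_of_subset_of_card_le Finset.inter_subset_right (by omega)
    rw [← h1, h2]
  · intro h
    exact absurd (Finset.mem_powersetCard.2 ⟨hA, hc⟩) h

theorem lattice_word (n : ℕ) (w : Fin n → ℕ) (c : (Fin n → ℕ) → ℂ) (hw : c w ≠ 0)
    (hlex : ∀ u k, (∀ l < k, u l = w l) → w k < u k → c u = 0)
    (hHW : ∀ (i : ℕ) (u : Fin n → ℕ),
      ∑ k ∈ Finset.univ.filter (fun k => u k = i), c (Function.update u k (i+1)) = 0)
    (r : Fin n) (i : ℕ) :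
    (Finset.univ.filter (fun k => r ≤ k ∧ w k = i + 1)).card ≤
      (Finset.univ.filter (fun k => r ≤ k ∧ w k = i)).card := by
  by_contra hcon
  push Not at hcon
  set A0 := Finset.univ.filter (fun k => r ≤ k ∧ w k = i + 1) with hA0
  set A1 := Finset.univ.filter (fun k => r ≤ k ∧ w k = i) with hA1
  have hd : Disjoint A0 A1 := by
    rw [Finset.disjoint_left]
    intro k h1 h2
    simp [hA0, hA1] at h1 h2
    omega
  set wd : Finset (Fin n) → Fin n → ℕ :=
    fun A k => if k ∈ A0 ∪ A1 then (if k ∈ A then i + 1 else i) else w k with hwd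
  have hwA : wd A0 = w := by
    ext k
    simp only [hwd]
    split_ifs with h1 h2
    · simp [hA0] at h2; omega
    · simp [h2, hA1] at h1; omega
    · rfl
  apply hw
  rw [← hwA]
  refine gott (A0 ∪ A1) A0.card (fun A => c (wd A)) ?_ A0 Finset.subset_union_left rfl ?_
  · intro B hB _
    rw [← hHW i (wd B)]
    rw [← Finset.sum_subset (s₁ := (A0 ∪ A1) \ B)
      (s₂ := Finset.univ.filter (fun k => wd B k = i))]
    · apply Finset.sum_congr rfl
      intro k hk
      simp only [Finset.mem_sdiff] at hk
      congr 1
      ext l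
      by_cases hl : l = k
      · subst hl; simp only [hwd, Function.update_self, if_pos hk.1, Finset.mem_insert_self, if_true]
      · simp [hwd, hl, Function.update_of_ne]
    · intro k hk
      simp only [Finset.mem_sdiff] at hk
      simp only [hwd, if_pos hk.1, if_neg hk.2, Finset.mem_filter, Finset.mem_univ, true_and]
    · intro k hk1 hk2
      simp only [Finset.mem_filter, Finset.mem_univ, true_and, Finset.mem_sdiff] at hk1 hk2
      have hkS : k ∉ A0 ∪ A1 := by
        intro h
        apply hk2
        refine ⟨h, fun hB' => ?_⟩
        simp only [hwd] at hk1
        rw [if_pos h, if_pos hB'] at hk1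
        omega
      have hwk : w k = i := by
        simp only [hwd] at hk1
        rwa [if_neg hkS] at hk1
      have hkr : k < r := by
        by_contra h
        push Not at h
        apply hkS
        simp [hA1, h, hwk]
      apply hlex _ k
      · intro l hl
        rw [Function.update_of_ne hl.ne]
        have : ¬ r ≤ l := not_le.2 (hl.trans hkr)
        simp only [hwd]
        rw [if_neg]
        simp [hA0, hA1, this]
      · simp [hwk]
  · rw [Finset.card_union_of_disjoint hd]; omega

theorem exists_filling (n : ℕ) (lam : YoungDiagram) (hlam : lam.card = n) (w : Fin n → ℕ)
    (hw : Multiset.map w Finset.univ.val = Multiset.map Prod.fst lam.cells.val)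
    (hlat : ∀ (r : Fin n) (i : ℕ), (Finset.univ.filter (fun k => r ≤ k ∧ w k = i + 1)).card ≤
      (Finset.univ.filter (fun k => r ≤ k ∧ w k = i)).card) :
    ∃ T : lam.cells ≃ Fin n, (∀ c, w (T c) = (c : ℕ × ℕ).1) ∧
      ∀ c c' : lam.cells, (c : ℕ × ℕ).2 = (c' : ℕ × ℕ).2 → (c : ℕ × ℕ).1 < (c' : ℕ × ℕ).1 →
        T c' < T c := by
  have hrow : ∀ i, (Finset.univ.filter (fun k => w k = i)).card = lam.rowLen i := by
    intro i
    rw [YoungDiagram.rowLen_eq_card, YoungDiagram.row]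
    have := congrArg (Multiset.count i) hw
    rw [Multiset.count_map, Multiset.count_map] at this
    simp only [Finset.card, Finset.filter_val]
    rw [Multiset.filter_congr (q := fun a => i = w a) (by intros; exact eq_comm), this]
    congr 1
    exact Multiset.filter_congr (by intros; exact eq_comm)
  set cnt : Fin n → ℕ := fun k => (Finset.univ.filter (fun k' => k < k' ∧ w k' = w k)).card with hcnt
  have hcnt' : ∀ k, (Finset.univ.filter (fun k' => k ≤ k' ∧ w k' = w k)).card = cnt k + 1 := by
    intro k
    rw [hcnt]
    simp only
    rw [← Finset.card_insert_of_notMem (a := k) (by simp)]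
    congr 1
    ext l
    simp only [Finset.mem_filter, Finset.mem_univ, true_and, Finset.mem_insert, le_iff_eq_or_lt]
    constructor
    · rintro ⟨h1 | h1, h2⟩
      · exact Or.inl h1.symm
      · exact Or.inr ⟨h1, h2⟩
    · rintro (rfl | ⟨h1, h2⟩)
      · exact ⟨Or.inl rfl, rfl⟩
      · exact ⟨Or.inr h1, h2⟩
  have hmem : ∀ k, (w k, cnt k) ∈ lam.cells := by
    intro k
    rw [YoungDiagram.mem_cells, YoungDiagram.mem_iff_lt_rowLen, ← hrow]
    have := hcnt' k
    have h2 : (Finset.univ.filter (fun k' => k ≤ k' ∧ w k' = w k)).card ≤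
      (Finset.univ.filter (fun k' => w k' = w k)).card := by
      apply Finset.card_le_card
      intro l; simp
    omega
  have hltcnt : ∀ k k', k < k' → w k = w k' → cnt k' < cnt k := by
    intro k k' h1 h2
    have := hcnt' k'
    have h3 : (Finset.univ.filter (fun l => k' ≤ l ∧ w l = w k')).card ≤ cnt k := by
      apply Finset.card_le_card
      intro l
      simp only [Finset.mem_filter, Finset.mem_univ, true_and]
      rintro ⟨h4, h5⟩
      exact ⟨lt_of_lt_of_le h1 h4, by rw [h5, h2]⟩
    omega
  let F : Fin n → lam.cells := fun k => ⟨(w k, cnt k), hmem k⟩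
  have hinj : Function.Injective F := by
    intro k k' h
    simp only [F, Subtype.mk.injEq, Prod.mk.injEq] at h
    rcases lt_trichotomy k k' with h1 | h1 | h1
    · have := hltcnt _ _ h1 h.1; omega
    · exact h1
    · have := hltcnt _ _ h1 h.1.symm; omega
  have hbij : Function.Bijective F := by
    rw [Fintype.bijective_iff_injective_and_card]
    refine ⟨hinj, ?_⟩
    simp [← hlam, YoungDiagram.card]
  have hanti : ∀ r, Antitone (fun i => (Finset.univ.filter (fun k => r ≤ k ∧ w k = i)).card) :=
    fun r => antitone_nat_of_succ_le (hlat r)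
  let e := Equiv.ofBijective F hbij
  have key : ∀ k k', cnt k = cnt k' → w k < w k' → k' < k := by
    intro k k' h1 h2
    by_contra h3
    push Not at h3
    have h3' : k < k' := lt_of_le_of_ne h3 (by rintro rfl; omega)
    have h4 := hanti k' h2.le
    simp only at h4
    rw [hcnt'] at h4
    have h5 : (Finset.univ.filter (fun l => k' ≤ l ∧ w l = w k)).card ≤ cnt k := by
      apply Finset.card_le_card
      intro l
      simp only [Finset.mem_filter, Finset.mem_univ, true_and]
      rintro ⟨h4, h5⟩
      exact ⟨lt_of_lt_of_le h3' h4, h5⟩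
    omega
  refine ⟨e.symm, ?_, ?_⟩
  · intro c
    obtain ⟨k, rfl⟩ := e.surjective c
    simp [e, F]
  · intro c c'
    obtain ⟨k, rfl⟩ := e.surjective c
    obtain ⟨k', rfl⟩ := e.surjective c'
    intro h1 h2
    rw [Equiv.symm_apply_apply, Equiv.symm_apply_apply]
    exact key k k' h1 h2

theorem degree_X_sub_X (n : ℕ) (a b : Fin n) (h : b < a) :
    MonomialOrder.lex.degree (X a - X b : MvPolynomial (Fin n) ℂ) = Finsupp.single b 1 := by
  rw [← neg_sub, MonomialOrder.degree_neg, MonomialOrder.degree_sub_of_lt, MonomialOrder.degree_X]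
  rw [MonomialOrder.degree_X, MonomialOrder.degree_X, MonomialOrder.lex_lt_iff]
  refine ⟨b, ?_, ?_⟩
  · intro j hj
    simp [Finsupp.single_apply, hj.ne', (hj.trans h).ne']
  · simp [Finsupp.single_apply, h.ne']

theorem spechtPoly_ne_zero (n : ℕ) (lam : YoungDiagram) (T : lam.cells ≃ Fin n) :
    spechtPoly n lam T ≠ 0 := by
  rw [spechtPoly, Finset.prod_ne_zero_iff]
  rintro ⟨c, c'⟩ h
  simp only [Finset.mem_filter, Finset.mem_univ, true_and] at h
  rw [sub_ne_zero]
  intro h2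
  have := T.injective (X_injective h2)
  simp only at this
  rw [this] at h
  omega

theorem degree_spechtPoly (n : ℕ) (lam : YoungDiagram) (T : lam.cells ≃ Fin n) (w : Fin n →₀ ℕ)
    (hT : ∀ c, w (T c) = (c : ℕ × ℕ).1)
    (hT2 : ∀ c c' : lam.cells, (c : ℕ × ℕ).2 = (c' : ℕ × ℕ).2 → (c : ℕ × ℕ).1 < (c' : ℕ × ℕ).1 →
        T c' < T c) :
    MonomialOrder.lex.degree (spechtPoly n lam T) = w := by
  have hne := spechtPoly_ne_zero n lam T
  rw [spechtPoly] at hne ⊢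
  rw [MonomialOrder.degree_prod (Finset.prod_ne_zero_iff.1 hne)]
  rw [Finset.sum_congr rfl (g := fun p : lam.cells × lam.cells => Finsupp.single (T p.2) 1)]
  · ext k
    obtain ⟨c, rfl⟩ := T.surjective k
    rw [hT, Finsupp.finsetSum_apply]
    simp only [Finsupp.single_apply, EmbeddingLike.apply_eq_iff_eq]
    rw [← Finset.sum_filter, Finset.sum_const, smul_eq_mul, mul_one, Finset.filter_filter]
    rw [← Finset.card_range (c : ℕ × ℕ).1]
    refine Finset.card_bij' (fun p _ => (p.1 : ℕ × ℕ).1)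
      (fun i hi => (⟨(i, (c : ℕ × ℕ).2), by
        rw [YoungDiagram.mem_cells]
        exact lam.up_left_mem (Finset.mem_range.1 hi).le le_rfl c.2⟩, c)) ?_ ?_ ?_ ?_
    · rintro ⟨a, b⟩ h
      simp only [Finset.mem_filter, Finset.mem_univ, true_and] at h
      obtain ⟨⟨h1, h2⟩, rfl⟩ := h
      simpa using h2
    · intro i hi
      simpa using hi
    · rintro ⟨a, b⟩ h
      simp only [Finset.mem_filter, Finset.mem_univ, true_and] at h
      obtain ⟨⟨h1, h2⟩, rfl⟩ := h
      ext <;> simp [h1]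
    · intro i hi
      rfl
  · rintro ⟨a, b⟩ h
    simp only [Finset.mem_filter, Finset.mem_univ, true_and] at h
    exact degree_X_sub_X n _ _ (hT2 _ _ h.1 h.2)

theorem mem_Lspace_iff (n : ℕ) (lam : YoungDiagram) (f : MvPolynomial (Fin n) ℂ) :
    f ∈ Lspace n lam ↔ ∀ d, coeff d f ≠ 0 →
      Multiset.map (⇑d) Finset.univ.val = Multiset.map Prod.fst lam.cells.val := by
  constructor
  · intro hf
    refine Submodule.span_induction (p := fun f _ => ∀ d, coeff d f ≠ 0 →
      Multiset.map (⇑d) Finset.univ.val = Multiset.map Prod.fst lam.cells.val) ?_ ?_ ?_ ?_ hf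
    · rintro p ⟨e, he, rfl⟩ d hd
      rw [coeff_monomial] at hd
      split_ifs at hd with h
      · rw [← h, he]
      · exact absurd rfl hd
    · intro d hd; simp at hd
    · intro p q _ _ hp hq d hd
      by_cases h : coeff d p = 0
      · apply hq; rw [coeff_add, h, zero_add] at hd; exact hd
      · exact hp d h
    · intro a p _ hp d hd
      apply hp
      rw [coeff_smul] at hd
      exact right_ne_zero_of_mul hd
  · intro h
    rw [f.as_sum]
    apply Submodule.sum_mem
    intro d hd
    rw [show monomial d (coeff d f) = coeff d f • monomial d (1 : ℂ) by
      rw [smul_monomial, smul_eq_mul, mul_one]]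
    apply Submodule.smul_mem
    exact Submodule.subset_span ⟨d, h d (mem_support_iff.1 hd), rfl⟩

theorem sum_pderiv_eq_zero (n : ℕ) (f : MvPolynomial (Fin n) ℂ)
    (hf : ∀ c : ℂ, MvPolynomial.aeval (fun i : Fin n => X i + C c) f = f) :
    ∑ i, pderiv i f = 0 := by
  let G : MvPolynomial (Fin n) ℂ →ₐ[ℂ] Polynomial (MvPolynomial (Fin n) ℂ) :=
    aeval (fun i => Polynomial.C (X i) + Polynomial.X)
  have h1 : ∀ g, Polynomial.derivative (G g) = G (∑ i, pderiv i g) := by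
    intro g
    induction g using MvPolynomial.induction_on with
    | C a =>
      simp [G, Polynomial.algebraMap_apply]
    | add p q hp hq =>
      simp only [map_add, hp, hq, Finset.sum_add_distrib]
    | mul_X p j hp =>
      have : ∑ i, pderiv i (p * X j) = (∑ i, pderiv i p) * X j + p := by
        simp only [pderiv_mul, Finset.sum_add_distrib, Finset.sum_mul]
        congr 1
        rw [Finset.sum_eq_single j]
        · simp
        · intro b _ hb; rw [pderiv_X_of_ne hb.symm, mul_zero]
        · simp
      rw [this, map_mul, Polynomial.derivative_mul, hp, map_add, map_mul]
      simp [G]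
  have h2 : G f = Polynomial.C f := by
    have hinf : (Set.range (fun c : ℂ => (C c : MvPolynomial (Fin n) ℂ))).Infinite :=
      Set.infinite_range_of_injective (C_injective _ _)
    refine Polynomial.eq_of_infinite_eval_eq _ _ (hinf.mono ?_)
    rintro _ ⟨c, rfl⟩
    simp only [Set.mem_ofPred_eq, Polynomial.eval_C]
    conv_rhs => rw [← hf c]
    have h3 : ((Polynomial.aeval (C c : MvPolynomial (Fin n) ℂ)).restrictScalars ℂ).comp G =
        aeval (fun i : Fin n => X i + C c) := by
      ext i : 1
      simp [G]
    rw [← h3]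
    simp [Polynomial.coe_aeval_eq_eval]
  have h4 := h1 f
  rw [h2, Polynomial.derivative_C] at h4
  have h5 : ((Polynomial.aeval (0 : MvPolynomial (Fin n) ℂ)).restrictScalars ℂ).comp G =
      AlgHom.id ℂ _ := by
    ext i : 1
    simp [G]
  have h6 := congrArg (fun φ => φ (∑ i, pderiv i f)) h5
  simp only [AlgHom.comp_apply, ← h4, map_zero, AlgHom.id_apply] at h6
  exact h6.symm

theorem map_add_single (n : ℕ) (u : Fin n →₀ ℕ) (k : Fin n) :
    u k ::ₘ Multiset.map (⇑(u + Finsupp.single k 1 : Fin n →₀ ℕ)) Finset.univ.val =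
      (u k + 1) ::ₘ Multiset.map (⇑u) Finset.univ.val := by
  have hu : (Finset.univ : Finset (Fin n)).val = k ::ₘ (Finset.univ.erase k).val := by
    rw [← Finset.insert_val_of_notMem (Finset.notMem_erase k _), Finset.insert_erase (Finset.mem_univ k)]
  rw [hu, Multiset.map_cons, Multiset.map_cons, Multiset.cons_swap]
  congr 1
  · simp
  · congr 1
    apply Multiset.map_congr rfl
    intro l hl
    have : l ≠ k := by
      rintro rfl; exact Finset.notMem_erase l Finset.univ hl
    simp [Finsupp.single_apply, this.symm]

theorem highest_weight (n : ℕ) (lam : YoungDiagram) (f : MvPolynomial (Fin n) ℂ)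
    (hL : f ∈ Lspace n lam) (hD : ∑ i, pderiv i f = 0) (i : ℕ) (u : Fin n →₀ ℕ) :
    ∑ k ∈ Finset.univ.filter (fun k => u k = i), coeff (u + Finsupp.single k 1) f = 0 := by
  rw [mem_Lspace_iff] at hL
  by_cases h : ∀ k, u k = i → coeff (u + Finsupp.single k 1) f = 0
  · apply Finset.sum_eq_zero
    intro k hk
    exact h k (Finset.mem_filter.1 hk).2
  · push Not at h
    obtain ⟨k, hk, hk2⟩ := h
    have h1 := congrArg (coeff u) hD
    simp only [coeff_sum, coeff_pderiv, coeff_zero] at h1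
    rw [← Finset.sum_subset (Finset.subset_univ (Finset.univ.filter (fun k => u k = i)))] at h1
    · rw [Finset.sum_congr rfl (g := fun k => coeff (u + Finsupp.single k 1) f * ((i : ℂ) + 1)),
        ← Finset.sum_mul] at h1
      · rcases mul_eq_zero.1 h1 with h2 | h2
        · exact h2
        · exact absurd h2 (by exact_mod_cast Nat.succ_ne_zero i)
      · intro l hl
        rw [(Finset.mem_filter.1 hl).2]
    · intro l _ hl
      simp only [Finset.mem_filter, Finset.mem_univ, true_and] at hl
      have : coeff (u + Finsupp.single l 1) f = 0 := by
        by_contra hne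
        apply hl
        have e1 := map_add_single n u k
        have e2 := map_add_single n u l
        rw [hL _ hk2, hk] at e1
        rw [hL _ hne] at e2
        set A := Multiset.map Prod.fst lam.cells.val
        set B := Multiset.map (⇑u) Finset.univ.val
        have e3 := congrArg (Multiset.count i) e1
        have e4 := congrArg (Multiset.count i) e2
        simp only [Multiset.count_cons] at e3 e4
        by_contra hne
        split_ifs at e3 e4 <;> omega
      rw [this, zero_mul]

theorem det_eq_spechtPoly (n : ℕ) (lam : YoungDiagram) (T : lam.cells ≃ Fin n) :
    (Matrix.of (fun c c' : lam.cells => if (c : ℕ × ℕ).2 = (c' : ℕ × ℕ).2 then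
      (-X (T c) : MvPolynomial (Fin n) ℂ) ^ (c' : ℕ × ℕ).1 else 0)).det = spechtPoly n lam T := by
  set M := (Matrix.of (fun c c' : lam.cells => if (c : ℕ × ℕ).2 = (c' : ℕ × ℕ).2 then
      (-X (T c) : MvPolynomial (Fin n) ℂ) ^ (c' : ℕ × ℕ).1 else 0)) with hM
  have hB : M.BlockTriangular (fun c : lam.cells => (c : ℕ × ℕ).2) := by
    intro c c' h
    simp only [hM, Matrix.of_apply]
    exact if_neg (ne_of_gt h)
  rw [hB.det, spechtPoly]
  rw [← Finset.prod_fiberwise_of_maps_to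
    (t := Finset.univ.image (fun c : lam.cells => (c : ℕ × ℕ).2))
    (g := fun p : lam.cells × lam.cells => (p.1 : ℕ × ℕ).2)
    (by intro p _; exact Finset.mem_image_of_mem _ (Finset.mem_univ _))]
  apply Finset.prod_congr rfl
  intro a _
  let e : Fin (lam.colLen a) ≃ {c : lam.cells // (c : ℕ × ℕ).2 = a} :=
    { toFun := fun i => ⟨⟨(i, a), by
        rw [YoungDiagram.mem_cells, YoungDiagram.mem_iff_lt_colLen]; exact i.2⟩, rfl⟩
      invFun := fun c => ⟨(c.1 : ℕ × ℕ).1, by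
        rw [← YoungDiagram.mem_iff_lt_colLen, ← YoungDiagram.mem_cells]
        obtain ⟨⟨⟨x, y⟩, h⟩, rfl⟩ := c
        exact h⟩
      left_inv := fun i => rfl
      right_inv := by
        rintro ⟨⟨⟨x, y⟩, h⟩, rfl⟩
        rfl }
  have hV : (M.toSquareBlock (fun c : lam.cells => (c : ℕ × ℕ).2) a).submatrix e e =
      Matrix.vandermonde (fun i => (-X (T (e i).1) : MvPolynomial (Fin n) ℂ)) := by
    ext1 i j
    simp [Matrix.toSquareBlock, Matrix.toSquareBlockProp, hM, Matrix.vandermonde_apply, e]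
  rw [← Matrix.det_submatrix_equiv_self e, hV, Matrix.det_vandermonde, Finset.prod_sigma']
  refine Finset.prod_bij (fun x _ => ((e x.1).1, (e x.2).1)) ?_ ?_ ?_ ?_
  · rintro ⟨i, j⟩ h
    simpa [e] using h
  · rintro ⟨i, j⟩ _ ⟨i', j'⟩ _ h
    simp only [Prod.mk.injEq] at h
    have h1 := e.injective (Subtype.ext h.1)
    have h2 := e.injective (Subtype.ext h.2)
    simp [h1, h2]
  · rintro ⟨c, c'⟩ h
    simp only [Finset.mem_filter, Finset.mem_univ, true_and] at h
    obtain ⟨⟨h1, h2⟩, h3⟩ := h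
    refine ⟨⟨e.symm ⟨c, h3⟩, e.symm ⟨c', h1 ▸ h3⟩⟩, ?_, ?_⟩
    · simpa [e] using h2
    · simp
  · rintro ⟨i, j⟩ h
    simp only
    ring

theorem spechtPoly_mem_Lspace (n : ℕ) (lam : YoungDiagram) (T : lam.cells ≃ Fin n) :
    spechtPoly n lam T ∈ Lspace n lam := by
  rw [← det_eq_spechtPoly, Matrix.det_apply]
  apply Submodule.sum_mem
  intro σ _
  rw [Units.smul_def, ← Int.cast_smul_eq_zsmul ℂ]
  apply Submodule.smul_mem
  simp only [Matrix.of_apply]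
  by_cases h : ∀ c : lam.cells, (σ c : ℕ × ℕ).2 = (c : ℕ × ℕ).2
  · let d : Fin n →₀ ℕ := Finsupp.equivFunOnFinite.symm
      (fun k => ((σ.symm (T.symm k) : lam.cells) : ℕ × ℕ).1)
    have h1 : (∏ c : lam.cells, if (σ c : ℕ × ℕ).2 = (c : ℕ × ℕ).2 then
        (-X (T (σ c)) : MvPolynomial (Fin n) ℂ) ^ (c : ℕ × ℕ).1 else 0) =
        (∏ c : lam.cells, (-1 : ℂ) ^ (c : ℕ × ℕ).1) • monomial d 1 := by
      rw [smul_eq_C_mul, monomial_eq, C_1, one_mul, Finsupp.prod_fintype _ _ (by simp), map_prod,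
        ← Equiv.prod_comp (σ.trans T) (fun k => (X k : MvPolynomial (Fin n) ℂ) ^ d k),
        ← Finset.prod_mul_distrib]
      apply Finset.prod_congr rfl
      intro c _
      rw [if_pos (h c), neg_pow]
      simp [d]
    rw [h1]
    apply Submodule.smul_mem
    refine Submodule.subset_span ⟨d, ?_, rfl⟩
    have h2 : (Finset.univ : Finset (Fin n)).val =
        Multiset.map (σ.trans T) (Finset.univ : Finset lam.cells).val := by
      rw [← Finset.map_univ_equiv (σ.trans T)]; rfl
    rw [h2, Multiset.map_map]
    have h3 : (⇑d ∘ ⇑(σ.trans T)) = fun c : lam.cells => (c : ℕ × ℕ).1 := by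
      funext c; simp [d]
    rw [h3]
    have h4 : lam.cells.val = Multiset.map Subtype.val (Finset.univ : Finset lam.cells).val := by
      conv_lhs => rw [← Finset.attach_map_val (s := lam.cells)]
      rfl
    rw [h4, Multiset.map_map]
    rfl
  · push Not at h
    obtain ⟨c, hc⟩ := h
    rw [Finset.prod_eq_zero (Finset.mem_univ c) (if_neg hc)]
    exact Submodule.zero_mem _

theorem spechtPoly_shift (n : ℕ) (lam : YoungDiagram) (T : lam.cells ≃ Fin n) (c : ℂ) :
    MvPolynomial.aeval (fun i : Fin n => X i + C c) (spechtPoly n lam T) = spechtPoly n lam T := by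
  rw [spechtPoly, map_prod]
  apply Finset.prod_congr rfl
  intro p _
  simp

theorem main_induction (n : ℕ) (lam : YoungDiagram) (hlam : lam.card = n)
    (f : MvPolynomial (Fin n) ℂ) (hL : f ∈ Lspace n lam)
    (hS : ∀ c : ℂ, MvPolynomial.aeval (fun i : Fin n => X i + C c) f = f) :
    f ∈ spechtModule n lam := by
  induction hs : (MonomialOrder.lex (σ := Fin n)).toSyn (MonomialOrder.lex.degree f)
    using WellFoundedLT.induction generalizing f with
  | ind s ih =>
  subst hs
  by_cases hf : f = 0
  · rw [hf]; exact Submodule.zero_mem _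
  set w := MonomialOrder.lex.degree f with hw
  have hlead : coeff w f ≠ 0 := MonomialOrder.leadingCoeff_ne_zero_iff.2 hf
  have hD := sum_pderiv_eq_zero n f hS
  have hlat := lattice_word n w (fun u => coeff (Finsupp.equivFunOnFinite.symm u) f)
    (by simpa using hlead)
    (by
      intro u k h1 h2
      apply MonomialOrder.coeff_eq_zero_of_lt (m := MonomialOrder.lex)
      rw [MonomialOrder.lex_lt_iff, ← hw]
      refine ⟨k, ?_, ?_⟩
      · intro l hl
        simpa using (h1 l hl).symm
      · simpa using h2)
    (by
      intro i u
      rw [← highest_weight n lam f hL hD i (Finsupp.equivFunOnFinite.symm u)]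
      apply Finset.sum_congr rfl
      intro k hk
      simp only [Finset.mem_filter, Finset.mem_univ, true_and] at hk
      congr 1
      ext l
      by_cases hl : l = k
      · subst hl; simp [hk]
      · simp [hl, Finsupp.single_apply, Ne.symm hl])
  obtain ⟨T, hT1, hT2⟩ := exists_filling n lam hlam w ((mem_Lspace_iff n lam f).1 hL w hlead) hlat
  have hdeg := degree_spechtPoly n lam T w hT1 hT2
  have hne := spechtPoly_ne_zero n lam T
  set P := spechtPoly n lam T with hP
  have hPl : coeff w P ≠ 0 := by
    rw [← hdeg]; exact MonomialOrder.leadingCoeff_ne_zero_iff.2 hne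
  have hPmem : P ∈ spechtModule n lam := Submodule.subset_span ⟨T, rfl⟩
  set a := coeff w f / coeff w P with ha
  have hsub : f = (f - a • P) + a • P := by ring
  rw [hsub]
  apply Submodule.add_mem _ _ (Submodule.smul_mem _ _ hPmem)
  by_cases hz : f - a • P = 0
  · rw [hz]; exact Submodule.zero_mem _
  refine ih _ ?_ (f - a • P) ?_ ?_ rfl
  · apply lt_of_le_of_ne
    · refine (MonomialOrder.degree_sub_le).trans (sup_le le_rfl ?_)
      refine (MonomialOrder.degree_smul_le).trans ?_
      rw [hdeg]
    · intro h
      have h' := (MonomialOrder.lex (σ := Fin n)).toSyn.injective h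
      have h2 := (MonomialOrder.leadingCoeff_ne_zero_iff (m := MonomialOrder.lex)).2 hz
      apply h2
      rw [MonomialOrder.leadingCoeff, h', coeff_sub, coeff_smul, smul_eq_mul, ha,
        div_mul_cancel₀ _ hPl, sub_self]
  · exact Submodule.sub_mem _ hL (Submodule.smul_mem _ _ (spechtPoly_mem_Lspace n lam T))
  · intro c
    rw [map_sub, map_smul, hS, hP, spechtPoly_shift]

/-- The Specht module `SP_λ` equals the subspace of `L_λ` of all forms depending only on
the differences of the variables (i.e. invariant under simultaneously adding a constant
to all variables). -/
theorem spechtModule_eq_shift_invariants (n : ℕ) (lam : YoungDiagram) (hlam : lam.card = n) :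
    (spechtModule n lam : Set (MvPolynomial (Fin n) ℂ)) =
      {f | f ∈ Lspace n lam ∧
        ∀ c : ℂ, MvPolynomial.aeval (fun i : Fin n => X i + C c) f = f} := by
  ext f
  constructor
  · intro hf
    refine ⟨?_, ?_⟩
    · have : spechtModule n lam ≤ Lspace n lam := by
        rw [spechtModule, Submodule.span_le]
        rintro _ ⟨T, rfl⟩
        exact spechtPoly_mem_Lspace n lam T
      exact this hf
    · intro c
      refine Submodule.span_induction (p := fun f _ =>
        MvPolynomial.aeval (fun i : Fin n => X i + C c) f = f) ?_ ?_ ?_ ?_ hf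
      · rintro _ ⟨T, rfl⟩
        exact spechtPoly_shift n lam T c
      · simp
      · intro p q _ _ hp hq
        rw [map_add, hp, hq]
      · intro a p _ hp
        rw [map_smul, hp]
  · rintro ⟨h1, h2⟩
    exact main_induction n lam hlam f h1 h2

end
end

section
/- Let λ ⊢ n. The Specht polynomials SP_t, where t ranges over all standard Young tableaux of shape λ, form a basis of the Specht module SP_λ: they are linearly independent over ℂ and their ℂ-linear span equals the span of the Specht polynomials SP_T over all bijective fillings T of λ. -/
open scoped Classical

noncomputable section

open MvPolynomial

/-- A bijective filling of the cells of `mu` by `0,…,n-1` is standard if it is strictly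
increasing along each row and strictly increasing down each column. -/
def IsStandardFilling {n : ℕ} {mu : YoungDiagram} (T : mu.cells ≃ Fin n) : Prop :=
  (∀ c d : mu.cells, (c : ℕ × ℕ).1 = (d : ℕ × ℕ).1 → (c : ℕ × ℕ).2 < (d : ℕ × ℕ).2 →
      (T c : ℕ) < (T d : ℕ)) ∧
  (∀ c d : mu.cells, (c : ℕ × ℕ).2 = (d : ℕ × ℕ).2 → (c : ℕ × ℕ).1 < (d : ℕ × ℕ).1 →
      (T c : ℕ) < (T d : ℕ))

lemma sp_digits (N : ℕ) : ∀ (n : ℕ) (f g : Fin n → ℕ), (∀ i, f i < N) → (∀ i, g i < N) →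
    ∑ i, f i * N ^ (i : ℕ) = ∑ i, g i * N ^ (i : ℕ) → f = g := by
  intro n
  induction n with
  | zero => intro f g _ _ _; exact Subsingleton.elim _ _
  | succ n ih =>
    intro f g hf hg h
    rw [Fin.sum_univ_succ, Fin.sum_univ_succ] at h
    have hr : ∀ f : Fin (n+1) → ℕ, ∑ i : Fin n, f i.succ * N ^ ((i.succ : Fin (n+1)) : ℕ)
        = N * ∑ i : Fin n, f i.succ * N ^ (i : ℕ) := by
      intro f
      rw [Finset.mul_sum]
      refine Finset.sum_congr rfl fun i _ => ?_
      rw [Fin.val_succ, pow_succ]; ring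
    rw [hr f, hr g] at h
    simp only [Fin.val_zero, pow_zero, mul_one] at h
    have h0 : f 0 = g 0 := by
      have := congrArg (· % N) h
      simpa [Nat.add_mul_mod_self_left, Nat.mod_eq_of_lt (hf 0), Nat.mod_eq_of_lt (hg 0)] using this
    have hN : 0 < N := lt_of_le_of_lt (Nat.zero_le _) (hf 0)
    have h1 : ∑ i : Fin n, f i.succ * N ^ (i : ℕ) = ∑ i : Fin n, g i.succ * N ^ (i : ℕ) := by
      rw [h0] at h
      exact Nat.eq_of_mul_eq_mul_left hN (Nat.add_left_cancel h)
    have h2 := ih (fun i => f i.succ) (fun i => g i.succ) (fun i => hf _) (fun i => hg _) h1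
    funext i
    refine Fin.cases h0 (fun i => ?_) i
    exact congrFun h2 i

lemma sp_linInd {ι : Type*} (f : ι → Polynomial ℂ) (h0 : ∀ i, f i ≠ 0)
    (hinj : Function.Injective fun i => (f i).natDegree) : LinearIndependent ℂ f := by
  rw [linearIndependent_iff']
  intro s g hg i hi
  by_contra hne
  have hd := Polynomial.degree_sum_eq_of_disjoint (fun i => g i • f i) s (by
    intro a ha b hb hab
    have ha' : g a ≠ 0 := by rintro h; exact ha.2 (by simp [h])
    have hb' : g b ≠ 0 := by rintro h; exact hb.2 (by simp [h])
    simp only [Function.onFun, Function.comp]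
    rw [Polynomial.degree_smul_of_smul_regular _ (isSMulRegular_of_group (Units.mk0 _ ha')),
      Polynomial.degree_smul_of_smul_regular _ (isSMulRegular_of_group (Units.mk0 _ hb'))]
    intro h
    exact hab (hinj (Polynomial.natDegree_eq_of_degree_eq h)))
  rw [hg, Polynomial.degree_zero] at hd
  have := Finset.le_sup (f := fun i => (g i • f i).degree) hi
  rw [← hd, le_bot_iff, Polynomial.degree_eq_bot] at this
  exact (smul_ne_zero hne (h0 i)) this

lemma sp_card_above (lam : YoungDiagram) (q : lam.cells) :
    (Finset.univ.filter (fun p : lam.cells => (p : ℕ × ℕ).2 = (q : ℕ × ℕ).2 ∧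
      (p : ℕ × ℕ).1 < (q : ℕ × ℕ).1)).card = (q : ℕ × ℕ).1 := by
  conv_rhs => rw [← Finset.card_range (q : ℕ × ℕ).1]
  refine Finset.card_bij (fun p _ => (p : ℕ × ℕ).1) ?_ ?_ ?_
  · intro p hp; simp at hp ⊢; exact hp.2
  · intro p hp p' hp' h
    simp only [Finset.mem_filter, Finset.mem_univ, true_and] at hp hp'
    exact Subtype.ext (Prod.ext h (hp.1.trans hp'.1.symm))
  · intro k hk
    rw [Finset.mem_range] at hk
    refine ⟨⟨(k, (q : ℕ × ℕ).2), lam.up_left_mem hk.le le_rfl q.2⟩, by simp [hk], rfl⟩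

lemma sp_card_left (lam : YoungDiagram) (q : lam.cells) :
    (Finset.univ.filter (fun p : lam.cells => (p : ℕ × ℕ).1 = (q : ℕ × ℕ).1 ∧
      (p : ℕ × ℕ).2 < (q : ℕ × ℕ).2)).card = (q : ℕ × ℕ).2 := by
  conv_rhs => rw [← Finset.card_range (q : ℕ × ℕ).2]
  refine Finset.card_bij (fun p _ => (p : ℕ × ℕ).2) ?_ ?_ ?_
  · intro p hp; simp at hp ⊢; exact hp.2
  · intro p hp p' hp' h
    simp only [Finset.mem_filter, Finset.mem_univ, true_and] at hp hp'
    exact Subtype.ext (Prod.ext (hp.1.trans hp'.1.symm) h)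
  · intro k hk
    rw [Finset.mem_range] at hk
    refine ⟨⟨((q : ℕ × ℕ).1, k), lam.up_left_mem le_rfl hk.le q.2⟩, by simp [hk], rfl⟩

lemma sp_col_eq {n : ℕ} {lam : YoungDiagram} (T : lam.cells ≃ Fin n) (hT : IsStandardFilling T)
    (v : Fin n) :
    (T.symm v : ℕ × ℕ).2 = (Finset.univ.filter (fun w : Fin n =>
      (T.symm w : ℕ × ℕ).1 = (T.symm v : ℕ × ℕ).1 ∧ w < v)).card := by
  rw [← sp_card_left lam (T.symm v)]
  refine Finset.card_bij (fun p _ => T p) ?_ ?_ ?_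
  · intro p hp
    simp only [Finset.mem_filter, Finset.mem_univ, true_and] at hp
    have := hT.1 _ _ hp.1 hp.2
    simp only [Finset.mem_filter, Finset.mem_univ, true_and, Equiv.symm_apply_apply, hp.1]
    simpa using this
  · intro p _ p' _ h; exact T.injective h
  · intro w hw
    simp only [Finset.mem_filter, Finset.mem_univ, true_and] at hw
    refine ⟨T.symm w, ?_, by simp⟩
    simp only [Finset.mem_filter, Finset.mem_univ, true_and]
    refine ⟨hw.1, ?_⟩
    by_contra hle
    rcases lt_or_eq_of_le (not_lt.mp hle) with h | h
    · have := hT.1 _ _ hw.1.symm h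
      simp only [Equiv.apply_symm_apply] at this
      exact absurd hw.2 (by rw [Fin.lt_def]; omega)
    · have : T.symm w = T.symm v := Subtype.ext (Prod.ext hw.1 h.symm)
      have := T.symm.injective this
      exact absurd hw.2 (by simp [this])

lemma sp_std_ext {n : ℕ} {lam : YoungDiagram} (T T' : lam.cells ≃ Fin n)
    (hT : IsStandardFilling T) (hT' : IsStandardFilling T')
    (h : ∀ v, (T.symm v : ℕ × ℕ).1 = (T'.symm v : ℕ × ℕ).1) : T = T' := by
  have : T.symm = T'.symm := by
    ext1 v
    refine Subtype.ext (Prod.ext (h v) ?_)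
    rw [sp_col_eq T hT, sp_col_eq T' hT']
    simp only [h]
  rw [← T.symm_symm, this, T'.symm_symm]

lemma sp_indep (n : ℕ) (lam : YoungDiagram) :
    LinearIndependent ℂ
        (fun T : {T : lam.cells ≃ Fin n // IsStandardFilling T} => spechtPoly n lam T.1) := by
  set N : ℕ := (∑ c : lam.cells, (c : ℕ × ℕ).1) + 2 with hN
  have hrow : ∀ c : lam.cells, (c : ℕ × ℕ).1 < N := by
    intro c
    have := Finset.single_le_sum (f := fun c : lam.cells => (c : ℕ × ℕ).1)
      (fun _ _ => Nat.zero_le _) (Finset.mem_univ c)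
    omega
  let φ : MvPolynomial (Fin n) ℂ →ₐ[ℂ] Polynomial ℂ :=
    aeval (fun v : Fin n => (Polynomial.X : Polynomial ℂ) ^ (N ^ (v : ℕ)))
  have hfac : ∀ T : lam.cells ≃ Fin n, IsStandardFilling T → ∀ p q : lam.cells,
      (p : ℕ × ℕ).2 = (q : ℕ × ℕ).2 ∧ (p : ℕ × ℕ).1 < (q : ℕ × ℕ).1 →
      (φ (X (T p) - X (T q))).natDegree = N ^ (T q : ℕ) ∧ φ (X (T p) - X (T q)) ≠ 0 := by
    intro T hT p q hpq
    have hlt := hT.2 p q hpq.1 hpq.2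
    have hlt2 : N ^ (T p : ℕ) < N ^ (T q : ℕ) := Nat.pow_lt_pow_right (by omega) hlt
    have h1 : (φ (X (T p) - X (T q))).natDegree = N ^ (T q : ℕ) := by
      simp only [φ, map_sub, aeval_X]
      rw [Polynomial.natDegree_sub_eq_right_of_natDegree_lt]
      · simp
      · simpa using hlt2
    refine ⟨h1, fun h0 => ?_⟩
    rw [h0, Polynomial.natDegree_zero] at h1
    have : 0 < N ^ (T q : ℕ) := Nat.pow_pos (by omega)
    omega
  have hne : ∀ T : {T : lam.cells ≃ Fin n // IsStandardFilling T},
      φ (spechtPoly n lam T.1) ≠ 0 := by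
    intro T
    rw [spechtPoly, map_prod]
    refine Finset.prod_ne_zero_iff.mpr fun p hp => ?_
    exact (hfac T.1 T.2 p.1 p.2 (by simpa using hp)).2
  have hdeg : ∀ T : {T : lam.cells ≃ Fin n // IsStandardFilling T},
      (φ (spechtPoly n lam T.1)).natDegree
        = ∑ v : Fin n, (T.1.symm v : ℕ × ℕ).1 * N ^ (v : ℕ) := by
    intro T
    rw [spechtPoly, map_prod, Polynomial.natDegree_prod]
    · rw [Finset.sum_congr rfl (g := fun p => N ^ (T.1 p.2 : ℕ))
        (fun p hp => (hfac T.1 T.2 p.1 p.2 (by simpa using hp)).1)]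
      rw [Finset.sum_filter, Fintype.sum_prod_type_right, ← T.1.sum_comp]
      refine Finset.sum_congr rfl fun q _ => ?_
      simp only [Equiv.symm_apply_apply]
      rw [← Finset.sum_filter, Finset.sum_const, sp_card_above, smul_eq_mul]
    · intro p hp
      exact (hfac T.1 T.2 p.1 p.2 (by simpa using hp)).2
  apply LinearIndependent.of_comp φ.toLinearMap
  refine sp_linInd _ hne ?_
  intro T T' h
  simp only [Function.comp, AlgHom.toLinearMap_apply] at h
  rw [hdeg, hdeg] at h
  have := sp_digits N n _ _ (fun v => hrow (T.1.symm v)) (fun v => hrow (T'.1.symm v)) h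
  exact Subtype.ext (sp_std_ext _ _ T.2 T'.2 (fun v => congrFun this v))

/-- The Specht polynomial in variables indexed by the cells. -/
noncomputable def spQ (lam : YoungDiagram) : MvPolynomial lam.cells ℂ :=
  ∏ p ∈ Finset.univ.filter
      (fun p : lam.cells × lam.cells =>
        (p.1 : ℕ × ℕ).2 = (p.2 : ℕ × ℕ).2 ∧ (p.1 : ℕ × ℕ).1 < (p.2 : ℕ × ℕ).1),
    (X p.1 - X p.2)

lemma sp_rename (n : ℕ) (lam : YoungDiagram) (T : lam.cells ≃ Fin n) :
    rename T (spQ lam) = spechtPoly n lam T := by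
  simp [spQ, spechtPoly, map_prod]

lemma sp_rename_trans (n : ℕ) (lam : YoungDiagram) (T : lam.cells ≃ Fin n)
    (σ : Equiv.Perm lam.cells) :
    rename T (rename σ (spQ lam)) = spechtPoly n lam (σ.trans T) := by
  rw [← sp_rename, rename_rename]; rfl

lemma sp_order (lam : YoungDiagram) : ∃ (m : ℕ) (e : lam.cells ≃ Fin m), ∀ p q : lam.cells,
    e p < e q ↔ ((p : ℕ × ℕ).2 < (q : ℕ × ℕ).2 ∨
      (p : ℕ × ℕ).2 = (q : ℕ × ℕ).2 ∧ (p : ℕ × ℕ).1 < (q : ℕ × ℕ).1) := by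
  let g : lam.cells → ℕ ×ₗ ℕ := fun c => toLex ((c : ℕ × ℕ).2, (c : ℕ × ℕ).1)
  have hg : Function.Injective g := by
    intro a b h
    have := toLex.injective h
    rw [Prod.mk.injEq] at this
    exact Subtype.ext (Prod.ext this.2 this.1)
  let E := (Fintype.orderIsoFinOfCardEq (Set.range g) rfl).symm
  refine ⟨_, (Equiv.ofInjective g hg).trans E.toEquiv, fun p q => ?_⟩
  change E _ < E _ ↔ _
  rw [E.lt_iff_lt, ← Subtype.coe_lt_coe, Equiv.ofInjective_apply, Equiv.ofInjective_apply,
    Prod.Lex.toLex_lt_toLex]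

/-- Column preserving permutations act on the Specht polynomial by the sign. -/
lemma sp_sign (lam : YoungDiagram) (σ : Equiv.Perm lam.cells)
    (hσ : ∀ c, (σ c : ℕ × ℕ).2 = (c : ℕ × ℕ).2) :
    rename σ (spQ lam) = ((Equiv.Perm.sign σ : ℤ) : MvPolynomial lam.cells ℂ) * spQ lam := by
  obtain ⟨m, e, he⟩ := sp_order lam
  let F : lam.cells → lam.cells → MvPolynomial lam.cells ℂ := fun c d =>
    if (c : ℕ × ℕ).2 = (d : ℕ × ℕ).2 then X c - X d
    else if (c : ℕ × ℕ).2 < (d : ℕ × ℕ).2 then 1 else -1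
  have hF : ∀ c d, F c d = - F d c := by
    intro c d
    simp only [F]
    rcases lt_trichotomy (c : ℕ × ℕ).2 (d : ℕ × ℕ).2 with h | h | h
    · simp [h, h.ne, h.ne', h.not_gt]
    · simp [h]
    · simp [h, h.ne, h.ne', h.not_gt]
  have key := (e.permCongr σ).prod_Iio_comp_eq_sign_mul_prod
    (f := fun i j => F (e.symm i) (e.symm j)) (fun i j => hF _ _)
  rw [Equiv.Perm.sign_permCongr] at key
  have hprod : ∀ τ : Equiv.Perm lam.cells, (∀ c, (τ c : ℕ × ℕ).2 = (c : ℕ × ℕ).2) →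
      ∏ j : Fin m, ∏ i ∈ Finset.Iio j, F (τ (e.symm i)) (τ (e.symm j)) = rename τ (spQ lam) := by
    intro τ hτ
    rw [spQ, map_prod, Finset.prod_filter, Fintype.prod_prod_type_right, ← e.symm.prod_comp]
    refine Finset.prod_congr rfl fun j _ => ?_
    rw [← e.symm.prod_comp, show Finset.Iio j = Finset.univ.filter (fun i => i < j) by ext; simp,
      Finset.prod_filter]
    refine Finset.prod_congr rfl fun i _ => ?_
    have h1 := he (e.symm i) (e.symm j)
    simp only [Equiv.apply_symm_apply] at h1
    simp only [h1, F, hτ, map_sub, rename_X]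
    rcases lt_trichotomy (e.symm i : ℕ × ℕ).2 (e.symm j : ℕ × ℕ).2 with h | h | h
    · simp [h, h.ne]
    · simp [h]
    · simp [h.ne', h.not_gt]
  have h1 := hprod σ hσ
  have h2 := hprod 1 (fun c => rfl)
  rw [← h1]
  have h3 : rename (1 : Equiv.Perm lam.cells) (spQ lam) = spQ lam := by
    rw [Equiv.Perm.coe_one, rename_id]; rfl
  rw [h3] at h2
  rw [← h2]
  simpa [Equiv.permCongr_apply] using key

/-- Antisymmetrization over `S` kills polynomials of small degree in the variables of `S`. -/
lemma sp_antisym {C : Type*} [Fintype C] [DecidableEq C] (S : Finset C) (hS : S.Nonempty) (p : MvPolynomial C ℂ)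
    (hp : ∀ c ∈ S, degreeOf c p + 1 < S.card) (G : Finset (Equiv.Perm C))
    (hG : ∀ σ, σ ∈ G ↔ ∀ c, c ∉ S → σ c = c) :
    ∑ σ ∈ G, ((Equiv.Perm.sign σ : ℤ) : MvPolynomial C ℂ) * rename σ p = 0 := by
  rw [p.as_sum]
  simp only [map_sum, Finset.mul_sum]
  rw [Finset.sum_comm]
  refine Finset.sum_eq_zero fun m hm => ?_
  obtain ⟨c, hc, d, hd, hcd, hmcd⟩ := Finset.exists_ne_map_eq_of_card_lt_of_maps_to
    (s := S) (t := Finset.range (S.card - 1)) (f := fun c => m c) (by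
      simp only [Finset.card_range]
      have := hS.card_pos
      omega) (by
      intro c hc
      have h1 := hp c hc
      have h2 := monomial_le_degreeOf c hm
      simp only [Finset.coe_range, Set.mem_Iio]
      omega)
  set P : MvPolynomial C ℂ := monomial m (coeff m p)
  have hP : rename (Equiv.swap c d) P = P := by
    simp only [P, rename_monomial]
    have hmd : Finsupp.mapDomain (Equiv.swap c d) m = m := by
     refine Finsupp.ext fun x => ?_
     rw [Finsupp.mapDomain_equiv_apply, Equiv.symm_swap]
     by_cases h1 : x = c
     · rw [h1, Equiv.swap_apply_left]; exact hmcd.symm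
     · by_cases h2 : x = d
       · rw [h2, Equiv.swap_apply_right]; exact hmcd
       · rw [Equiv.swap_apply_of_ne_of_ne h1 h2]
    rw [hmd]
  have hfix : ∀ x, x ∉ S → Equiv.swap c d x = x := fun x hx =>
    Equiv.swap_apply_of_ne_of_ne (by rintro rfl; exact hx hc) (by rintro rfl; exact hx hd)
  have hneg : ∑ σ ∈ G, ((Equiv.Perm.sign σ : ℤ) : MvPolynomial C ℂ) * rename σ P
      = ∑ σ ∈ G, -(((Equiv.Perm.sign σ : ℤ) : MvPolynomial C ℂ) * rename σ P) := by
    refine Finset.sum_bij' (fun σ _ => σ * Equiv.swap c d) (fun σ _ => σ * Equiv.swap c d)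
      ?_ ?_ ?_ ?_ ?_
    · intro σ h; rw [hG] at h ⊢; intro x hx
      simp [hfix x hx, h x hx]
    · intro σ h; rw [hG] at h ⊢; intro x hx
      simp [hfix x hx, h x hx]
    · intro σ _; simp [mul_assoc]
    · intro σ _; simp [mul_assoc]
    · intro σ _
      rw [Equiv.Perm.coe_mul, ← rename_rename, hP, Equiv.Perm.sign_mul, Equiv.Perm.sign_swap hcd]
      simp
  rw [Finset.sum_neg_distrib] at hneg
  exact self_eq_neg.mp hneg

lemma sp_degree (lam : YoungDiagram) (c : lam.cells) :
    degreeOf c (spQ lam) + 1 ≤ lam.colLen (c : ℕ × ℕ).2 := by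
  have hrow : ∀ d : lam.cells, (d : ℕ × ℕ).1 < lam.colLen (d : ℕ × ℕ).2 := fun d =>
    YoungDiagram.mem_iff_lt_colLen.mp d.2
  have h1 : degreeOf c (spQ lam) ≤
      (((Finset.range (lam.colLen (c : ℕ × ℕ).2)).erase (c : ℕ × ℕ).1)).card := by
    refine (degreeOf_prod_le _ _ _).trans ?_
    have h2 : ∀ p : lam.cells × lam.cells, degreeOf c (X p.1 - X p.2 : MvPolynomial lam.cells ℂ)
        ≤ if (c = p.1 ∨ c = p.2) then 1 else 0 := by
      intro p
      refine (degreeOf_sub_le _ _ _).trans ?_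
      rw [degreeOf_X, degreeOf_X]
      by_cases h : c = p.1 <;> by_cases h' : c = p.2 <;> simp only [h, h', if_true, if_false, or_true, true_or, or_self, max_self] <;>
        (try split_ifs) <;> simp_all
    refine (Finset.sum_le_sum fun p _ => h2 p).trans ?_
    rw [← Finset.sum_filter, Finset.sum_const, smul_eq_mul, mul_one, Finset.filter_filter]
    refine Finset.card_le_card_of_injOn
      (fun p => if c = p.1 then (p.2 : ℕ × ℕ).1 else (p.1 : ℕ × ℕ).1) ?_ ?_
    · rintro ⟨p, q⟩ h
      have hp := hrow p
      have hq := hrow q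
      simp only [Finset.coe_filter, Finset.mem_univ, true_and, Set.mem_ofPred_eq] at h
      obtain ⟨⟨h1, h2⟩, h3⟩ := h
      simp only [Finset.coe_erase, Set.mem_sdiff, Finset.mem_coe, Finset.mem_range,
        Set.mem_singleton_iff]
      split_ifs with h4
      · subst h4; exact ⟨by rw [h1]; exact hq, by omega⟩
      · have : c = q := h3.resolve_left h4
        subst this; exact ⟨by rw [← h1]; exact hp, by omega⟩
    · rintro ⟨p, q⟩ h ⟨p', q'⟩ h' heq
      simp only [Finset.coe_filter, Finset.mem_univ, true_and, Set.mem_ofPred_eq] at h h'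
      obtain ⟨⟨h1, h2⟩, h3⟩ := h
      obtain ⟨⟨h1', h2'⟩, h3'⟩ := h'
      simp only at heq
      have ext : ∀ a b : lam.cells, (a : ℕ × ℕ).1 = (b : ℕ × ℕ).1 →
          (a : ℕ × ℕ).2 = (b : ℕ × ℕ).2 → a = b := fun a b h h' => Subtype.ext (Prod.ext h h')
      by_cases h4 : c = p
      · by_cases h5 : c = p'
        · rw [if_pos h4, if_pos h5] at heq
          subst h4; subst h5
          rw [ext q q' heq (by rw [← h1, h1'])]
        · rw [if_pos h4, if_neg h5] at heq
          have h6 := h3'.resolve_left h5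
          subst h4; subst h6; omega
      · have h6 := h3.resolve_left h4
        by_cases h5 : c = p'
        · rw [if_neg h4, if_pos h5] at heq
          subst h5; subst h6; omega
        · rw [if_neg h4, if_neg h5] at heq
          have h7 := h3'.resolve_left h5
          subst h6; subst h7
          rw [ext p p' heq (by rw [h1, h1'])]
  have hc := hrow c
  rw [Finset.card_erase_of_mem (by simpa using hc), Finset.card_range] at h1
  omega

/-- The cells of the Garnir set. -/
noncomputable def spS (lam : YoungDiagram) (i j j' : ℕ) : Finset lam.cells :=
  Finset.univ.filter fun c : lam.cells =>
    ((c : ℕ × ℕ).2 = j ∧ i ≤ (c : ℕ × ℕ).1) ∨ ((c : ℕ × ℕ).2 = j' ∧ (c : ℕ × ℕ).1 ≤ i)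

lemma sp_cardS (lam : YoungDiagram) (i j j' : ℕ) (hj : j < j') (hm : (i, j') ∈ lam) :
    lam.colLen j + 1 ≤ (spS lam i j j').card := by
  have hm' : (i, j) ∈ lam := lam.up_left_mem le_rfl hj.le hm
  have hi : i < lam.colLen j := YoungDiagram.mem_iff_lt_colLen.mp hm'
  let f : ℕ → lam.cells := fun k =>
    if h : k ≤ i then ⟨(k, j'), lam.up_left_mem h le_rfl hm⟩
    else if h' : k - 1 < lam.colLen j then ⟨(k - 1, j), YoungDiagram.mem_iff_lt_colLen.mpr h'⟩
    else ⟨(i, j), hm'⟩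
  rw [← Finset.card_range (lam.colLen j + 1)]
  refine Finset.card_le_card_of_injOn f ?_ ?_
  · intro k hk
    simp only [Finset.coe_range, Set.mem_Iio] at hk
    simp only [spS, Finset.coe_filter, Finset.mem_univ, true_and, Set.mem_ofPred_eq, f]
    split_ifs with h h'
    · right; exact ⟨rfl, h⟩
    · left; exact ⟨rfl, by simp only; omega⟩
    · omega
  · intro k hk l hl h
    simp only [Finset.coe_range, Set.mem_Iio] at hk hl
    simp only [f] at h
    split_ifs at h <;> simp only [Subtype.mk.injEq, Prod.mk.injEq] at h <;> omega

lemma sp_garnir (lam : YoungDiagram) (i j j' : ℕ) (hj : j < j') (hm : (i, j') ∈ lam)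
    (G : Finset (Equiv.Perm lam.cells))
    (hG : ∀ σ, σ ∈ G ↔ ∀ c, c ∉ spS lam i j j' → σ c = c) :
    ∑ σ ∈ G, ((Equiv.Perm.sign σ : ℤ) : MvPolynomial lam.cells ℂ) * rename σ (spQ lam) = 0 := by
  refine sp_antisym (spS lam i j j') ?_ _ ?_ G hG
  · rw [← Finset.card_pos]
    have h2 := sp_cardS lam i j j' hj hm
    omega
  intro c hc
  have h1 := sp_degree lam c
  have h2 := sp_cardS lam i j j' hj hm
  have h3 : lam.colLen (c : ℕ × ℕ).2 ≤ lam.colLen j := by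
    apply lam.colLen_anti
    simp only [spS, Finset.mem_filter, Finset.mem_univ, true_and] at hc
    omega
  omega

/-- first measure -/
def spMu {n : ℕ} {lam : YoungDiagram} (T : lam.cells ≃ Fin n) : ℤ :=
  ∑ c : lam.cells, ((T c : ℕ) : ℤ) * ((c : ℕ × ℕ).2 : ℤ)

/-- second measure -/
def spNu {n : ℕ} {lam : YoungDiagram} (T : lam.cells ≃ Fin n) : ℤ :=
  ∑ c : lam.cells, ((T c : ℕ) : ℤ) * ((c : ℕ × ℕ).1 : ℤ)

lemma sp_mu_trans {n : ℕ} {lam : YoungDiagram} (T : lam.cells ≃ Fin n)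
    (σ : Equiv.Perm lam.cells) (w : lam.cells → ℤ) (β : ℤ) :
    2 * (∑ c, ((T (σ c) : ℕ) : ℤ) * w c - ∑ c, ((T c : ℕ) : ℤ) * w c) =
      ∑ c, (2 * ((T (σ c) : ℕ) : ℤ) - β) * (w c - w (σ c)) := by
  have h1 : ∑ c, ((T c : ℕ) : ℤ) * w c = ∑ c, ((T (σ c) : ℕ) : ℤ) * w (σ c) :=
    (Equiv.sum_comp σ (fun c => ((T c : ℕ) : ℤ) * w c)).symm
  have h2 : ∑ c, w c = ∑ c, w (σ c) := (Equiv.sum_comp σ w).symm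
  have h3 : ∑ c, (w c - w (σ c)) = 0 := by rw [Finset.sum_sub_distrib, h2, sub_self]
  rw [h1, ← Finset.sum_sub_distrib, Finset.mul_sum]
  have : ∑ c, (2 * ((T (σ c) : ℕ) : ℤ) - β) * (w c - w (σ c)) =
      ∑ c, 2 * (((T (σ c) : ℕ) : ℤ) * w c - ((T (σ c) : ℕ) : ℤ) * w (σ c))
        - β * ∑ c, (w c - w (σ c)) := by
    rw [Finset.mul_sum, ← Finset.sum_sub_distrib]
    exact Finset.sum_congr rfl fun c _ => by ring
  rw [this, h3]; ring

lemma sp_mu_lt {n : ℕ} {lam : YoungDiagram} (T : lam.cells ≃ Fin n)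
    (hcol : ∀ c d : lam.cells, (c : ℕ × ℕ).2 = (d : ℕ × ℕ).2 → (c : ℕ × ℕ).1 < (d : ℕ × ℕ).1 →
      (T c : ℕ) < (T d : ℕ)) (c d : lam.cells) (hr : (c : ℕ × ℕ).1 = (d : ℕ × ℕ).1)
    (hj : (c : ℕ × ℕ).2 < (d : ℕ × ℕ).2) (hv : (T d : ℕ) < (T c : ℕ))
    (σ : Equiv.Perm lam.cells)
    (hσ : ∀ x, x ∉ spS lam (c : ℕ × ℕ).1 (c : ℕ × ℕ).2 (d : ℕ × ℕ).2 → σ x = x)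
    (hne : ∃ x, (σ x : ℕ × ℕ).2 ≠ (x : ℕ × ℕ).2) : spMu T < spMu (σ.trans T) := by
  have key := sp_mu_trans T σ (fun x => ((x : ℕ × ℕ).2 : ℤ)) (2 * (T d : ℕ) + 1)
  set S := spS lam (c : ℕ × ℕ).1 (c : ℕ × ℕ).2 (d : ℕ × ℕ).2 with hS
  have hmem : ∀ x, x ∈ S ↔ ((x : ℕ × ℕ).2 = (c : ℕ × ℕ).2 ∧ (c : ℕ × ℕ).1 ≤ (x : ℕ × ℕ).1) ∨
      ((x : ℕ × ℕ).2 = (d : ℕ × ℕ).2 ∧ (x : ℕ × ℕ).1 ≤ (c : ℕ × ℕ).1) := by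
    intro x; simp [hS, spS]
  have hst : ∀ x, x ∈ S → σ x ∈ S := by
    intro x hx
    by_contra h
    have := σ.injective (hσ _ h)
    rw [this] at h
    exact h hx
  have hle : ∀ x y : lam.cells, (x : ℕ × ℕ).2 = (y : ℕ × ℕ).2 → (x : ℕ × ℕ).1 ≤ (y : ℕ × ℕ).1 →
      (T x : ℕ) ≤ (T y : ℕ) := by
    intro x y h h'
    rcases h'.lt_or_eq with h' | h'
    · exact (hcol x y h h').le
    · rw [Subtype.ext (Prod.ext h' h)]
  have hpos : ∀ x, (σ x : ℕ × ℕ).2 ≠ (x : ℕ × ℕ).2 →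
      0 < (2 * ((T (σ x) : ℕ) : ℤ) - (2 * (T d : ℕ) + 1)) *
        (((x : ℕ × ℕ).2 : ℤ) - ((σ x : ℕ × ℕ).2 : ℤ)) := by
    intro x hx
    have hxS : x ∈ S := by
      by_contra h
      exact hx (by rw [hσ x h])
    have hy := (hmem _).mp (hst x hxS)
    have hx' := (hmem _).mp hxS
    rcases hy with hy | hy
    · have := hle c (σ x) hy.1.symm hy.2
      apply mul_pos <;> omega
    · have := hle (σ x) d hy.1 (by omega)
      apply mul_pos_of_neg_of_neg <;> omega
  have hsum : 0 < ∑ x, (2 * ((T (σ x) : ℕ) : ℤ) - (2 * (T d : ℕ) + 1)) *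
        (((x : ℕ × ℕ).2 : ℤ) - ((σ x : ℕ × ℕ).2 : ℤ)) := by
    obtain ⟨x, hx⟩ := hne
    refine Finset.sum_pos' (fun y _ => ?_) ⟨x, Finset.mem_univ _, hpos x hx⟩
    by_cases h : (σ y : ℕ × ℕ).2 = (y : ℕ × ℕ).2
    · simp [h]
    · exact (hpos y h).le
  rw [← key] at hsum
  simp only [spMu, Equiv.trans_apply]
  linarith

lemma sp_swap {n : ℕ} {lam : YoungDiagram} (T : lam.cells ≃ Fin n) (c d : lam.cells)
    (hc : (c : ℕ × ℕ).2 = (d : ℕ × ℕ).2) (hr : (c : ℕ × ℕ).1 < (d : ℕ × ℕ).1)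
    (hv : (T d : ℕ) < (T c : ℕ)) :
    spechtPoly n lam ((Equiv.swap c d).trans T) = - spechtPoly n lam T ∧
      spMu ((Equiv.swap c d).trans T) = spMu T ∧ spNu T < spNu ((Equiv.swap c d).trans T) := by
  have hcd : c ≠ d := by rintro rfl; exact lt_irrefl _ hr
  have hcol : ∀ x, (Equiv.swap c d x : ℕ × ℕ).2 = (x : ℕ × ℕ).2 := by
    intro x
    by_cases h1 : x = c
    · subst h1; simp [hc]
    · by_cases h2 : x = d
      · subst h2; simp [hc]
      · rw [Equiv.swap_apply_of_ne_of_ne h1 h2]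
  refine ⟨?_, ?_, ?_⟩
  · rw [← sp_rename_trans, sp_sign _ _ hcol, Equiv.Perm.sign_swap hcd, ← sp_rename]
    simp
  · have key := sp_mu_trans T (Equiv.swap c d) (fun x => ((x : ℕ × ℕ).2 : ℤ)) 0
    simp only [hcol, sub_self, mul_zero, Finset.sum_const_zero] at key
    simp only [spMu, Equiv.trans_apply]
    linarith
  · have key := sp_mu_trans T (Equiv.swap c d) (fun x => ((x : ℕ × ℕ).1 : ℤ)) (2 * (T d : ℕ) + 1)
    have hsum : 0 < ∑ x, (2 * ((T (Equiv.swap c d x) : ℕ) : ℤ) - (2 * (T d : ℕ) + 1)) *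
        (((x : ℕ × ℕ).1 : ℤ) - ((Equiv.swap c d x : ℕ × ℕ).1 : ℤ)) := by
      refine Finset.sum_pos' (fun x _ => ?_) ⟨d, Finset.mem_univ _, ?_⟩
      · by_cases h1 : x = c
        · subst h1; rw [Equiv.swap_apply_left]
          apply mul_nonneg_of_nonpos_of_nonpos <;> omega
        · by_cases h2 : x = d
          · subst h2; rw [Equiv.swap_apply_right]
            apply mul_nonneg <;> omega
          · rw [Equiv.swap_apply_of_ne_of_ne h1 h2]; simp
      · rw [Equiv.swap_apply_right]
        apply mul_pos <;> omega
    rw [← key] at hsum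
    simp only [spNu, Equiv.trans_apply]
    linarith

lemma sp_mem_span (n : ℕ) (lam : YoungDiagram) (T : lam.cells ≃ Fin n) :
    spechtPoly n lam T ∈ Submodule.span ℂ
        (Set.range fun T : {T : lam.cells ≃ Fin n // IsStandardFilling T} =>
          spechtPoly n lam T.1) := by
  set W := Submodule.span ℂ
        (Set.range fun T : {T : lam.cells ≃ Fin n // IsStandardFilling T} =>
          spechtPoly n lam T.1) with hW
  by_contra hT
  obtain ⟨T, hTm, hmax⟩ := Finset.exists_max_image
    (Finset.univ.filter fun T : lam.cells ≃ Fin n => spechtPoly n lam T ∉ W)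
    (fun T => toLex (spMu T, spNu T)) ⟨T, by simpa using hT⟩
  have hbad : spechtPoly n lam T ∉ W := by simpa using hTm
  have hgood : ∀ T' : lam.cells ≃ Fin n,
      (spMu T < spMu T' ∨ spMu T = spMu T' ∧ spNu T < spNu T') → spechtPoly n lam T' ∈ W := by
    intro T' h
    by_contra hn
    have := hmax T' (by simpa using hn)
    rw [← not_lt] at this
    exact this (Prod.Lex.toLex_lt_toLex.mpr h)
  have hcol : ∀ c d : lam.cells, (c : ℕ × ℕ).2 = (d : ℕ × ℕ).2 → (c : ℕ × ℕ).1 < (d : ℕ × ℕ).1 →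
      (T c : ℕ) < (T d : ℕ) := by
    intro c d h1 h2
    by_contra h3
    have hne : (T d : ℕ) ≠ T c := by
      intro h
      have := T.injective (Fin.ext h)
      subst this
      exact lt_irrefl _ h2
    obtain ⟨a1, a2, a3⟩ := sp_swap T c d h1 h2 (by omega)
    have := hgood _ (Or.inr ⟨a2.symm, a3⟩)
    rw [a1] at this
    exact hbad (by simpa using W.neg_mem this)
  have hrow : ∀ c d : lam.cells, (c : ℕ × ℕ).1 = (d : ℕ × ℕ).1 → (c : ℕ × ℕ).2 < (d : ℕ × ℕ).2 →
      (T c : ℕ) < (T d : ℕ) := by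
    intro c d h1 h2
    by_contra h3
    have hne : (T d : ℕ) ≠ T c := by
      intro h
      have := T.injective (Fin.ext h)
      subst this
      exact lt_irrefl _ h2
    have hv : (T d : ℕ) < T c := by omega
    let G : Finset (Equiv.Perm lam.cells) := Finset.univ.filter fun σ =>
      ∀ x, x ∉ spS lam (c : ℕ × ℕ).1 (c : ℕ × ℕ).2 (d : ℕ × ℕ).2 → σ x = x
    have hG : ∀ σ, σ ∈ G ↔
      ∀ x, x ∉ spS lam (c : ℕ × ℕ).1 (c : ℕ × ℕ).2 (d : ℕ × ℕ).2 → σ x = x := by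
      intro σ; simp [G]
    have hgar := sp_garnir lam _ _ _ h2 (by rw [h1]; exact d.2) G hG
    have hgar2 := congrArg (rename T) hgar
    rw [map_sum, map_zero, ← Finset.sum_filter_add_sum_filter_not G
      (fun σ => ∀ x : lam.cells, (σ x : ℕ × ℕ).2 = (x : ℕ × ℕ).2)] at hgar2
    have hA : ∑ σ ∈ G.filter (fun σ => ∀ x : lam.cells, (σ x : ℕ × ℕ).2 = (x : ℕ × ℕ).2),
        rename T (((Equiv.Perm.sign σ : ℤ) : MvPolynomial lam.cells ℂ) * rename σ (spQ lam))
        = ((G.filter (fun σ => ∀ x : lam.cells, (σ x : ℕ × ℕ).2 = (x : ℕ × ℕ).2)).card : ℂ) •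
          spechtPoly n lam T := by
      rw [Finset.sum_congr rfl (g := fun _ => spechtPoly n lam T), Finset.sum_const,
        Nat.cast_smul_eq_nsmul]
      intro σ hσ
      rw [sp_sign lam σ (Finset.mem_filter.mp hσ).2, ← mul_assoc, ← Int.cast_mul,
        ← Units.val_mul, Int.units_mul_self]
      simp [sp_rename]
    have hB : ∑ σ ∈ G.filter (fun σ => ¬ ∀ x : lam.cells, (σ x : ℕ × ℕ).2 = (x : ℕ × ℕ).2),
        rename T (((Equiv.Perm.sign σ : ℤ) : MvPolynomial lam.cells ℂ) * rename σ (spQ lam))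
        ∈ W := by
      refine W.sum_mem fun σ hσ => ?_
      rw [Finset.mem_filter, hG] at hσ
      have hm := hgood _ (Or.inl (sp_mu_lt T hcol c d h1 h2 hv σ hσ.1 (by simpa using hσ.2)))
      rw [map_mul, sp_rename_trans, map_intCast, ← zsmul_eq_mul]
      exact zsmul_mem hm _
    rw [hA] at hgar2
    have hk : ((G.filter (fun σ => ∀ x : lam.cells, (σ x : ℕ × ℕ).2 = (x : ℕ × ℕ).2)).card : ℂ) ≠ 0 := by
      rw [Nat.cast_ne_zero, ← Nat.pos_iff_ne_zero, Finset.card_pos]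
      exact ⟨1, by simp [G]⟩
    apply hbad
    rw [← W.smul_mem_iff hk, eq_neg_of_add_eq_zero_left hgar2]
    exact W.neg_mem hB
  exact hbad (Submodule.subset_span ⟨⟨T, hrow, hcol⟩, rfl⟩)

/-- The Specht polynomials of the standard Young tableaux of shape `λ` form a basis of
the Specht module `SP_λ`: they are linearly independent and span the same space as the
Specht polynomials of all bijective fillings. -/
theorem spechtPoly_standard_basis (n : ℕ) (lam : YoungDiagram) (hlam : lam.card = n) :
    LinearIndependent ℂ
        (fun T : {T : lam.cells ≃ Fin n // IsStandardFilling T} => spechtPoly n lam T.1) ∧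
      Submodule.span ℂ
        (Set.range fun T : {T : lam.cells ≃ Fin n // IsStandardFilling T} =>
          spechtPoly n lam T.1) = spechtModule n lam := by
  refine ⟨sp_indep n lam, le_antisymm (Submodule.span_mono ?_) (Submodule.span_le.mpr ?_)⟩
  · rintro _ ⟨T, rfl⟩; exact ⟨T.1, rfl⟩
  · rintro _ ⟨T, rfl⟩; exact sp_mem_span n lam T

end
end
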